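/- arXiv:1811.12588 — 5 statements merged into one kernel-verified Lean document; each statement's English description precedes it below -/
import Mathlib

section
/- Let C be a 2-Calabi–Yau triangulated category with a cluster tilting subcategory R, and let X be a functorially finite rigid subcategory of C. Then C has a cluster tilting subcategory Y which contains X. -/
/-!
Setting: `C` is a Hom-finite Krull–Schmidt `k`-linear triangulated category over an
algebraically closed field `k` (Krull–Schmidt is encoded as Hom-finiteness together with
idempotent completeness). Subcategories are identified with their classes of objects and
are always assumed full, closed under isomorphisms, direct sums and direct summands.
-/

open CategoryTheory CategoryTheory.Limits CategoryTheory.Pretriangulated Opposite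

universe v u

variable {C : Type u} [Category.{v} C] [Preadditive C] [HasZeroObject C] [HasShift C ℤ]
  [∀ n : ℤ, (shiftFunctor C n).Additive] [Pretriangulated C]

/-- `Y` is a direct summand (retract) of `X`. -/
def IsRetractOf {D : Type*} [Category D] (Y X : D) : Prop :=
  ∃ (s : Y ⟶ X) (r : X ⟶ Y), s ≫ r = 𝟙 Y

/-- `S` is a direct sum (biproduct) of `F` and `G`. -/
def IsDirectSumOf {D : Type*} [Category D] [Preadditive D] (S F G : D) : Prop :=
  ∃ (i : F ⟶ S) (j : G ⟶ S) (p : S ⟶ F) (q : S ⟶ G),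
    i ≫ p = 𝟙 F ∧ j ≫ q = 𝟙 G ∧ i ≫ q = 0 ∧ j ≫ p = 0 ∧ p ≫ i + q ≫ j = 𝟙 S

/-- A subcategory of an additive category, identified with its class of objects:
closed under isomorphisms, finite direct sums and direct summands. -/
def IsSubcat {D : Type*} [Category D] [Preadditive D] (S : Set D) : Prop :=
  (∀ ⦃X Y : D⦄, (X ≅ Y) → X ∈ S → Y ∈ S) ∧
  (∀ ⦃F G T : D⦄, F ∈ S → G ∈ S → IsDirectSumOf T F G → T ∈ S) ∧
  (∀ ⦃X Y : D⦄, X ∈ S → IsRetractOf Y X → Y ∈ S)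

/-- `f : X ⟶ A` is a right `𝓧`-approximation of `A`:
every map `X' ⟶ A` with `X' ∈ 𝓧` factors through `f`. -/
def IsRightApprox {D : Type*} [Category D] (𝓧 : Set D) {X A : D} (f : X ⟶ A) : Prop :=
  ∀ X' ∈ 𝓧, ∀ g : X' ⟶ A, ∃ h : X' ⟶ X, h ≫ f = g

/-- `f : A ⟶ X` is a left `𝓧`-approximation of `A`:
every map `A ⟶ X'` with `X' ∈ 𝓧` factors through `f`. -/
def IsLeftApprox {D : Type*} [Category D] (𝓧 : Set D) {A X : D} (f : A ⟶ X) : Prop :=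
  ∀ X' ∈ 𝓧, ∀ g : A ⟶ X', ∃ h : X ⟶ X', f ≫ h = g

/-- `𝓧` is contravariantly finite: every object admits a right `𝓧`-approximation. -/
def ContravariantlyFinite {D : Type*} [Category D] (𝓧 : Set D) : Prop :=
  ∀ A : D, ∃ X ∈ 𝓧, ∃ f : X ⟶ A, IsRightApprox 𝓧 f

/-- `𝓧` is covariantly finite: every object admits a left `𝓧`-approximation. -/
def CovariantlyFinite {D : Type*} [Category D] (𝓧 : Set D) : Prop :=
  ∀ A : D, ∃ X ∈ 𝓧, ∃ f : A ⟶ X, IsLeftApprox 𝓧 f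

/-- `𝓧` is functorially finite. -/
def FunctoriallyFinite {D : Type*} [Category D] (𝓧 : Set D) : Prop :=
  ContravariantlyFinite 𝓧 ∧ CovariantlyFinite 𝓧

/-- `𝓧 ∨ add M`: the smallest subcategory containing `𝓧` and `M`. -/
def veeAdd {D : Type*} [Category D] [Preadditive D] (𝓧 : Set D) (M : D) : Set D :=
  ⋂₀ {T : Set D | IsSubcat T ∧ 𝓧 ⊆ T ∧ M ∈ T}

/-- The shift `𝓢⟦n⟧` of a subcategory (closed under isomorphism). -/
def shiftSet (𝓢 : Set C) (n : ℤ) : Set C := {Y | ∃ X ∈ 𝓢, Nonempty (Y ≅ X⟦n⟧)}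

/-- `𝓐 ∗ 𝓑`: the class of objects `M` admitting a distinguished triangle
`A → M → B → A⟦1⟧` with `A ∈ 𝓐` and `B ∈ 𝓑`. -/
def starSet (𝓐 𝓑 : Set C) : Set C :=
  {M | ∃ A ∈ 𝓐, ∃ B ∈ 𝓑, ∃ (f : A ⟶ M) (g : M ⟶ B) (h : B ⟶ A⟦(1:ℤ)⟧),
    Triangle.mk f g h ∈ distTriang C}

/-- `𝓡 ∗ 𝓡[1]`, the class of two-term objects with respect to `𝓡`. -/
def twoTerm (𝓡 : Set C) : Set C := starSet 𝓡 (shiftSet 𝓡 1)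

/-- `𝓡` is rigid: `Hom(R, R'[1]) = 0` for all `R, R' ∈ 𝓡`. -/
def IsRigidSubcat (𝓡 : Set C) : Prop :=
  ∀ R ∈ 𝓡, ∀ R' ∈ 𝓡, ∀ φ : R ⟶ R'⟦(1:ℤ)⟧, φ = 0

/-- `φ` lies in the ideal `[𝓡[1]]` of morphisms factoring through an object of `𝓡⟦1⟧`. -/
def InShiftIdeal (𝓡 : Set C) {A B : C} (φ : A ⟶ B) : Prop :=
  ∃ R ∈ 𝓡, ∃ (a : A ⟶ R⟦(1:ℤ)⟧) (b : R⟦(1:ℤ)⟧ ⟶ B), φ = a ≫ b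

/-- `𝓧` is `𝓡[1]`-rigid: `[𝓡[1]](𝓧, 𝓧[1]) = 0`. -/
def IsRelRigid (𝓡 𝓧 : Set C) : Prop :=
  ∀ X ∈ 𝓧, ∀ X' ∈ 𝓧, ∀ φ : X ⟶ X'⟦(1:ℤ)⟧, InShiftIdeal 𝓡 φ → φ = 0

/-- `[𝓡[1]](M, 𝓧[1]) = 0`. -/
def relOrthTo (𝓡 𝓧 : Set C) (M : C) : Prop :=
  ∀ X ∈ 𝓧, ∀ φ : M ⟶ X⟦(1:ℤ)⟧, InShiftIdeal 𝓡 φ → φ = 0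

/-- `[𝓡[1]](𝓧, M[1]) = 0`. -/
def relOrthFrom (𝓡 𝓧 : Set C) (M : C) : Prop :=
  ∀ X ∈ 𝓧, ∀ φ : X ⟶ M⟦(1:ℤ)⟧, InShiftIdeal 𝓡 φ → φ = 0

/-- `𝓧 ⊆ 𝓡 ∗ 𝓡[1]` is two-term maximal `𝓡[1]`-rigid: it is `𝓡[1]`-rigid and for every
`M ∈ 𝓡 ∗ 𝓡[1]`, `[𝓡[1]](𝓧 ∨ add M, (𝓧 ∨ add M)[1]) = 0` implies `M ∈ 𝓧`. -/
def IsTwoTermMaxRelRigid (𝓡 𝓧 : Set C) : Prop :=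
  𝓧 ⊆ twoTerm 𝓡 ∧ IsRelRigid 𝓡 𝓧 ∧
  ∀ M ∈ twoTerm 𝓡, IsRelRigid 𝓡 (veeAdd 𝓧 M) → M ∈ 𝓧

/-- `𝓧 ⊆ 𝓡 ∗ 𝓡[1]` is two-term weak `𝓡[1]`-cluster tilting: `𝓡 ⊆ 𝓧[-1] ∗ 𝓧` and
`𝓧 = {M ∈ 𝓡 ∗ 𝓡[1] : [𝓡[1]](M, 𝓧[1]) = 0 and [𝓡[1]](𝓧, M[1]) = 0}`. -/
def IsTwoTermWeakRelCT (𝓡 𝓧 : Set C) : Prop :=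
  𝓧 ⊆ twoTerm 𝓡 ∧
  (∀ R ∈ 𝓡, R ∈ starSet (shiftSet 𝓧 (-1)) 𝓧) ∧
  (∀ M : C, M ∈ 𝓧 ↔ M ∈ twoTerm 𝓡 ∧ relOrthTo 𝓡 𝓧 M ∧ relOrthFrom 𝓡 𝓧 M)

/-- `𝓧 ⊆ 𝓡 ∗ 𝓡[1]` is two-term `𝓡[1]`-cluster tilting: `𝓧` is contravariantly finite and
`𝓧 = {M ∈ 𝓡 ∗ 𝓡[1] : [𝓡[1]](M, 𝓧[1]) = 0 and [𝓡[1]](𝓧, M[1]) = 0}`. -/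
def IsTwoTermRelCT (𝓡 𝓧 : Set C) : Prop :=
  𝓧 ⊆ twoTerm 𝓡 ∧ ContravariantlyFinite 𝓧 ∧
  (∀ M : C, M ∈ 𝓧 ↔ M ∈ twoTerm 𝓡 ∧ relOrthTo 𝓡 𝓧 M ∧ relOrthFrom 𝓡 𝓧 M)

/-- `C` is 2-Calabi–Yau over `k`: there is a bifunctorial isomorphism
`Hom(X, Y) ≅ D Hom(Y, X⟦2⟧)`, where `D = Hom_k(-, k)`. -/
def IsTwoCalabiYau (k : Type*) [Field k] [Linear k C] : Prop :=
  ∃ η : ∀ (X Y : C), (X ⟶ Y) ≃ₗ[k] Module.Dual k (Y ⟶ X⟦(2:ℤ)⟧),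
    ∀ ⦃X X' Y Y' : C⦄ (f : X' ⟶ X) (g : Y ⟶ Y') (φ : X ⟶ Y) (ψ : Y' ⟶ X'⟦(2:ℤ)⟧),
      η X' Y' (f ≫ φ ≫ g) ψ = η X Y φ (g ≫ ψ ≫ f⟦(2:ℤ)⟧')

/-- `𝓡` is maximal rigid: rigid, and `Hom(A, B[1]) = 0` for all
`A, B ∈ 𝓡 ∨ add M` implies `M ∈ 𝓡`. -/
def IsMaxRigidSubcat (𝓡 : Set C) : Prop :=
  IsRigidSubcat 𝓡 ∧
  ∀ M : C, (∀ A ∈ veeAdd 𝓡 M, ∀ B ∈ veeAdd 𝓡 M, ∀ φ : A ⟶ B⟦(1:ℤ)⟧, φ = 0) → M ∈ 𝓡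

/-- A functorially finite subcategory `𝓡` is cluster tilting if
`𝓡 = {M : Hom(𝓡, M[1]) = 0} = {M : Hom(M, 𝓡[1]) = 0}`. -/
def IsClusterTilting (𝓡 : Set C) : Prop :=
  FunctoriallyFinite 𝓡 ∧
  (∀ M : C, M ∈ 𝓡 ↔ ∀ R ∈ 𝓡, ∀ φ : R ⟶ M⟦(1:ℤ)⟧, φ = 0) ∧
  (∀ M : C, M ∈ 𝓡 ↔ ∀ R ∈ 𝓡, ∀ φ : M ⟶ R⟦(1:ℤ)⟧, φ = 0)

/-!
The Calabi–Yau duality makes the vanishing of `Hom(A, B⟦1⟧)` symmetric in `A` and `B`. Following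
Bongartz, let `𝓑` be the class of all `U` in triangles `R ⟶ U ⟶ X ⟶ R⟦1⟧` with `R ∈ 𝓡`, `X ∈ 𝓧`
and `X ⟶ R⟦1⟧` a right `𝓧`-approximation. Wakamatsu's lemma gives `Hom(𝓧, 𝓑⟦1⟧) = 0`, and applying
it a second time shows that `𝓑` is rigid. Every `A` is two-term with respect to `𝓡`, and if
`Hom(𝓧, A⟦1⟧) = 0`, base change of the triangle `R₀ ⟶ A ⟶ R₁⟦1⟧ ⟶ R₀⟦1⟧` along a right
`𝓧`-approximation of `R₁⟦1⟧` gives an object of `𝓑` mapping to `A`, through which every map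
from an object left orthogonal to `𝓑⟦1⟧` factors. Hence the class of direct summands of objects
of `𝓑` is its own orthogonal.
-/

section Approximations

variable {D : Type*} [Category D] {𝓢 𝓣 : Set D} {X A B : D}

theorem IsRightApprox.mono {f : X ⟶ A} (hf : IsRightApprox 𝓣 f) (h : 𝓢 ⊆ 𝓣) :
    IsRightApprox 𝓢 f :=
  fun S hS => hf S (h hS)

theorem IsRightApprox.comp {f : X ⟶ A} {g : A ⟶ B} (hf : IsRightApprox 𝓢 f)
    (hg : IsRightApprox 𝓢 g) : IsRightApprox 𝓢 (f ≫ g) := by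
  intro S hS b
  obtain ⟨a, rfl⟩ := hg S hS b
  obtain ⟨x, rfl⟩ := hf S hS a
  exact ⟨x, (Category.assoc x f g).symm⟩

theorem IsRightApprox.comp_iso {f : X ⟶ A} (hf : IsRightApprox 𝓢 f) (e : A ≅ B) :
    IsRightApprox 𝓢 (f ≫ e.hom) :=
  hf.comp fun _ _ g => ⟨g ≫ e.inv, by rw [Category.assoc, e.inv_hom_id, Category.comp_id]⟩

theorem IsRightApprox.isRetractOf {f : X ⟶ A} (hf : IsRightApprox 𝓢 f) (hA : A ∈ 𝓢) :
    IsRetractOf A X :=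
  let ⟨s, hs⟩ := hf A hA (𝟙 A)
  ⟨s, f, hs⟩

end Approximations

section Orthogonality

variable {D : Type*} [Category D] [Preadditive D] [HasShift D ℤ]

/-- The right orthogonal of `𝓢` with respect to `Hom(-, -⟦1⟧)`: all `M` with
`Hom(𝓢, M⟦1⟧) = 0`. -/
def extRightPerp (𝓢 : Set D) : Set D :=
  {M | ∀ S ∈ 𝓢, ∀ φ : S ⟶ M⟦(1 : ℤ)⟧, φ = 0}

/-- The left orthogonal of `𝓢` with respect to `Hom(-, -⟦1⟧)`: all `M` with
`Hom(M, 𝓢⟦1⟧) = 0`. -/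
def extLeftPerp (𝓢 : Set D) : Set D :=
  {M | ∀ S ∈ 𝓢, ∀ φ : M ⟶ S⟦(1 : ℤ)⟧, φ = 0}

variable (D) in
/-- The vanishing of `Hom(A, B⟦1⟧)` is symmetric in `A` and `B`, as it is in a 2-Calabi–Yau
category. -/
def ExtVanishingSymmetric : Prop :=
  ∀ ⦃A B : D⦄, (∀ φ : A ⟶ B⟦(1 : ℤ)⟧, φ = 0) → ∀ φ : B ⟶ A⟦(1 : ℤ)⟧, φ = 0

theorem IsTwoCalabiYau.extVanishingSymmetric {k : Type*} [Field k] [Linear k D]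
    (h : IsTwoCalabiYau (C := D) k) : ExtVanishingSymmetric D := by
  intro A B hAB φ
  obtain ⟨η, -⟩ := h
  have hom_shift_eq_zero (ψ : A⟦(1 : ℤ)⟧ ⟶ B⟦(2 : ℤ)⟧) : ψ = 0 := by
    let e : B⟦(2 : ℤ)⟧ ≅ B⟦(1 : ℤ)⟧⟦(1 : ℤ)⟧ := (shiftFunctorAdd' D 1 1 2 (by norm_num)).app B
    obtain ⟨χ, hχ⟩ := (shiftFunctor D (1 : ℤ)).map_surjective (ψ ≫ e.hom)
    rw [← cancel_mono e.hom, ← hχ, hAB χ, Functor.map_zero, zero_comp]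
  refine (η B (A⟦(1 : ℤ)⟧)).map_eq_zero_iff.1 (LinearMap.ext fun ψ => ?_)
  rw [hom_shift_eq_zero ψ, map_zero, map_zero]

theorem ExtVanishingSymmetric.extLeftPerp_eq (h : ExtVanishingSymmetric D) (𝓢 : Set D) :
    extLeftPerp 𝓢 = extRightPerp 𝓢 :=
  Set.Subset.antisymm (fun _ hM S hS => h (hM S hS)) (fun _ hM S hS => h (hM S hS))

variable {𝓢 𝓣 : Set D}

theorem subset_extLeftPerp_iff : 𝓢 ⊆ extLeftPerp 𝓣 ↔ 𝓣 ⊆ extRightPerp 𝓢 :=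
  ⟨fun h T hT _ hS => h hS T hT, fun h S hS _ hT => h hT S hS⟩

theorem subset_extRightPerp_extLeftPerp : 𝓢 ⊆ extRightPerp (extLeftPerp 𝓢) :=
  subset_extLeftPerp_iff.1 subset_rfl

theorem isRigidSubcat_iff_subset_extRightPerp : IsRigidSubcat 𝓢 ↔ 𝓢 ⊆ extRightPerp 𝓢 :=
  ⟨fun h S hS S' hS' => h S' hS' S hS, fun h S hS _ hS' => h hS' S hS⟩

theorem mem_extRightPerp_of_isRetractOf {M N : D} (hM : M ∈ extRightPerp 𝓢)
    (hN : IsRetractOf N M) : N ∈ extRightPerp 𝓢 := by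
  obtain ⟨s, r, hsr⟩ := hN
  intro S hS φ
  calc φ = (φ ≫ s⟦(1 : ℤ)⟧') ≫ r⟦(1 : ℤ)⟧' := by
        rw [Category.assoc, ← Functor.map_comp, hsr, CategoryTheory.Functor.map_id,
          Category.comp_id]
    _ = 0 := by rw [hM S hS (φ ≫ s⟦(1 : ℤ)⟧'), zero_comp]

theorem isSubcat_extRightPerp [(shiftFunctor D (1 : ℤ)).Additive] (𝓢 : Set D) :
    IsSubcat (extRightPerp 𝓢) := by
  refine ⟨fun M N e hM => mem_extRightPerp_of_isRetractOf hM ⟨e.inv, e.hom, e.inv_hom_id⟩, ?_,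
    fun M N hM hN => mem_extRightPerp_of_isRetractOf hM hN⟩
  rintro F G T hF hG ⟨i, j, p, q, -, -, -, -, hpq⟩ S hS φ
  calc φ = (φ ≫ p⟦(1 : ℤ)⟧') ≫ i⟦(1 : ℤ)⟧' + (φ ≫ q⟦(1 : ℤ)⟧') ≫ j⟦(1 : ℤ)⟧' := by
        simp only [Category.assoc, ← Functor.map_comp, ← Preadditive.comp_add,
          ← Functor.map_add, hpq, CategoryTheory.Functor.map_id, Category.comp_id]
    _ = 0 := by
        rw [hF S hS (φ ≫ p⟦(1 : ℤ)⟧'), hG S hS (φ ≫ q⟦(1 : ℤ)⟧'), zero_comp, zero_comp, add_zero]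

end Orthogonality

section Triangles

variable {𝓢 : Set C} {T : Triangle C}

/-- Wakamatsu's lemma. -/
theorem obj₁_mem_extRightPerp (hT : T ∈ distTriang C)
    (happrox : IsRightApprox 𝓢 T.mor₂) (h₂ : T.obj₂ ∈ extRightPerp 𝓢) :
    T.obj₁ ∈ extRightPerp 𝓢 := by
  intro S hS φ
  obtain ⟨ψ, rfl⟩ := T.coyoneda_exact₁ hT φ (h₂ S hS _)
  obtain ⟨χ, rfl⟩ := happrox S hS ψ
  rw [Category.assoc, comp_distTriang_mor_zero₂₃ T hT, comp_zero]

theorem obj₃_mem_extLeftPerp (hT : T ∈ distTriang C)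
    (happrox : IsLeftApprox 𝓢 T.mor₁) (h₂ : T.obj₂ ∈ extLeftPerp 𝓢) :
    T.obj₃ ∈ extLeftPerp 𝓢 := by
  intro S hS φ
  obtain ⟨ψ, rfl⟩ := T.yoneda_exact₃ hT φ (h₂ S hS _)
  obtain ⟨ψ, rfl⟩ := (shiftFunctor C (1 : ℤ)).map_surjective ψ
  obtain ⟨χ, rfl⟩ := happrox S hS ψ
  rw [Functor.map_comp, ← Category.assoc, comp_distTriang_mor_zero₃₁ T hT, zero_comp]

theorem isRightApprox_mor₂ (hT : T ∈ distTriang C) (h₁ : T.obj₁ ∈ extRightPerp 𝓢) :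
    IsRightApprox 𝓢 T.mor₂ := by
  intro S hS g
  obtain ⟨s, hs⟩ := T.coyoneda_exact₃ hT g (h₁ S hS _)
  exact ⟨s, hs.symm⟩

theorem isLeftApprox_mor₁ (hT : T ∈ distTriang C) (h₃ : T.obj₃ ∈ extLeftPerp 𝓢) :
    IsLeftApprox 𝓢 T.mor₁ := by
  intro S hS f
  obtain ⟨ψ : T.obj₂⟦(1 : ℤ)⟧ ⟶ _, hψ : f⟦(1 : ℤ)⟧' = (-T.mor₁⟦(1 : ℤ)⟧') ≫ ψ⟩ :=
    T.rotate.yoneda_exact₃ (rot_of_distTriang T hT) (f⟦(1 : ℤ)⟧') (h₃ S hS _)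
  obtain ⟨χ, rfl⟩ := (shiftFunctor C (1 : ℤ)).map_surjective ψ
  refine ⟨-χ, (shiftFunctor C (1 : ℤ)).map_injective ?_⟩
  rw [hψ, Functor.map_comp, Functor.map_neg, Preadditive.comp_neg, Preadditive.neg_comp]

theorem exists_distTriang_weakPullback (hT : T ∈ distTriang C) {Z : C} (c : Z ⟶ T.obj₃) :
    ∃ (E : C) (i : T.obj₁ ⟶ E) (p : E ⟶ Z) (e : E ⟶ T.obj₂),
      Triangle.mk i p (c ≫ T.mor₃) ∈ distTriang C ∧ CommSq e p T.mor₂ c ∧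
      ∀ ⦃N : C⦄ (a : N ⟶ T.obj₂) (b : N ⟶ Z), a ≫ T.mor₂ = b ≫ c →
        ∃ s : N ⟶ E, s ≫ e = a ∧ s ≫ p = b := by
  obtain ⟨E, i, p, hE⟩ := distinguished_cocone_triangle₂ (c ≫ T.mor₃)
  obtain ⟨e : E ⟶ T.obj₂, hie : i ≫ e = 𝟙 _ ≫ T.mor₁, hpc : p ≫ c = e ≫ T.mor₂⟩ :=
    complete_distinguished_triangle_morphism₂ _ T hE hT (𝟙 T.obj₁) c (by
      change (c ≫ T.mor₃) ≫ (𝟙 T.obj₁)⟦(1 : ℤ)⟧' = c ≫ T.mor₃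
      rw [CategoryTheory.Functor.map_id, Category.comp_id])
  refine ⟨E, i, p, e, hE, ⟨hpc.symm⟩, fun N a b hab => ?_⟩
  obtain ⟨s : N ⟶ E, hs : b = s ≫ p⟩ := Triangle.coyoneda_exact₃ _ hE b (by
    change b ≫ c ≫ T.mor₃ = 0
    rw [← Category.assoc, ← hab, Category.assoc, comp_distTriang_mor_zero₂₃ T hT, comp_zero])
  -- `s` need not lift `a`, but the error `a - s ≫ e` comes from `T.obj₁`.
  obtain ⟨t, ht⟩ := T.coyoneda_exact₂ hT (a - s ≫ e) (by
    rw [Preadditive.sub_comp, hab, hs, Category.assoc, Category.assoc, hpc, sub_self])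
  have hip : i ≫ p = 0 := comp_distTriang_mor_zero₁₂ _ hE
  refine ⟨s + t ≫ i, ?_, ?_⟩
  · rw [Preadditive.add_comp, Category.assoc, hie, Category.id_comp, ← ht, add_sub_cancel]
  · rw [Preadditive.add_comp, Category.assoc, hip, comp_zero, add_zero, hs]

end Triangles

section SelfOrthogonal

variable {𝓢 : Set C}

theorem contravariantlyFinite_extLeftPerp (hrigid : IsRigidSubcat 𝓢)
    (hfin : CovariantlyFinite 𝓢) : ContravariantlyFinite (extLeftPerp 𝓢) := by
  intro A
  obtain ⟨S, hS, f, hf⟩ := hfin (A⟦(-1 : ℤ)⟧)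
  obtain ⟨Z, g, q, hT⟩ := distinguished_cocone_triangle f
  have hZ : Z ∈ extLeftPerp 𝓢 := obj₃_mem_extLeftPerp hT hf (hrigid S hS)
  have hq : IsRightApprox (extLeftPerp 𝓢) q :=
    isRightApprox_mor₂ (rot_of_distTriang _ hT) (subset_extRightPerp_extLeftPerp hS)
  exact ⟨Z, hZ, _, hq.comp_iso (shiftNegShift A (1 : ℤ))⟩

theorem covariantlyFinite_of_eq_extRightPerp (horth : 𝓢 = extRightPerp 𝓢)
    (hfin : ContravariantlyFinite 𝓢) : CovariantlyFinite 𝓢 := by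
  intro A
  obtain ⟨S, hS, g, hg⟩ := hfin (A⟦(1 : ℤ)⟧)
  obtain ⟨W, f, p, hT⟩ := distinguished_cocone_triangle₂ g
  have hW : W ∈ 𝓢 := horth.ge (obj₁_mem_extRightPerp (rot_of_distTriang _ hT) hg (horth.le hS))
  exact ⟨W, hW, f, isLeftApprox_mor₁ hT (subset_extLeftPerp_iff.2 horth.le hS)⟩

theorem mem_twoTerm_of_eq_extRightPerp (horth : 𝓢 = extRightPerp 𝓢)
    (hfin : ContravariantlyFinite 𝓢) (A : C) : A ∈ twoTerm 𝓢 := by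
  obtain ⟨S₀, hS₀, f, hf⟩ := hfin A
  obtain ⟨S₁, r, w, hT⟩ := distinguished_cocone_triangle₁ f
  have hS₁ : S₁ ∈ 𝓢 := horth.ge (obj₁_mem_extRightPerp hT hf (horth.le hS₀))
  exact ⟨S₀, hS₀, S₁⟦(1 : ℤ)⟧, ⟨S₁, hS₁, ⟨Iso.refl _⟩⟩, f, w, _, rot_of_distTriang _ hT⟩

theorem isClusterTilting_of_eq_extRightPerp (hsymm : ExtVanishingSymmetric C)
    (horth : 𝓢 = extRightPerp 𝓢) (hfin : ContravariantlyFinite 𝓢) : IsClusterTilting 𝓢 :=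
  ⟨⟨hfin, covariantlyFinite_of_eq_extRightPerp horth hfin⟩, Set.ext_iff.1 horth,
    Set.ext_iff.1 (horth.trans (hsymm.extLeftPerp_eq 𝓢).symm)⟩

end SelfOrthogonal

section Bongartz

/-- The Bongartz objects of `𝓧` relative to `𝓡`: extensions of an `X ∈ 𝓧` by an `R ∈ 𝓡` whose
class `X ⟶ R⟦1⟧` is a right `𝓧`-approximation. -/
def bongartzObjects (𝓡 𝓧 : Set C) : Set C :=
  {U | ∃ R ∈ 𝓡, ∃ X ∈ 𝓧, ∃ (i : R ⟶ U) (p : U ⟶ X) (h : X ⟶ R⟦(1 : ℤ)⟧),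
    Triangle.mk i p h ∈ distTriang C ∧ IsRightApprox 𝓧 h}

/-- The Bongartz completion of `𝓧` relative to `𝓡`: all direct summands of Bongartz objects. -/
def bongartzCompletion (𝓡 𝓧 : Set C) : Set C :=
  {M | ∃ U ∈ bongartzObjects 𝓡 𝓧, IsRetractOf M U}

variable {𝓡 𝓧 : Set C}

theorem bongartzObjects_subset_bongartzCompletion :
    bongartzObjects 𝓡 𝓧 ⊆ bongartzCompletion 𝓡 𝓧 :=
  fun U hU => ⟨U, hU, 𝟙 U, 𝟙 U, Category.comp_id (𝟙 U)⟩

theorem bongartzObjects_subset_extRightPerp (h𝓧 : IsRigidSubcat 𝓧) :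
    bongartzObjects 𝓡 𝓧 ⊆ extRightPerp 𝓧 := by
  rintro U ⟨R, -, X, hX, i, p, h, hT, hh⟩
  exact obj₁_mem_extRightPerp (rot_of_distTriang _ hT) hh
    (isRigidSubcat_iff_subset_extRightPerp.1 h𝓧 hX)

theorem isRigidSubcat_bongartzObjects (hsymm : ExtVanishingSymmetric C)
    (h𝓡 : IsRigidSubcat 𝓡) (h𝓧 : IsRigidSubcat 𝓧) : IsRigidSubcat (bongartzObjects 𝓡 𝓧) := by
  refine isRigidSubcat_iff_subset_extRightPerp.2 fun U ⟨R, hR, X, hX, i, p, h, hT, hh⟩ => ?_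
  have hX_perp : X ∈ extRightPerp (bongartzObjects 𝓡 𝓧) :=
    hsymm.extLeftPerp_eq _ ▸
      subset_extLeftPerp_iff.2 (bongartzObjects_subset_extRightPerp h𝓧) hX
  refine obj₁_mem_extRightPerp (rot_of_distTriang _ hT) ?_ hX_perp
  -- A map from a Bongartz object to `R⟦1⟧` factors through `𝓧`, so `h` approximates these too.
  rintro U' ⟨R', hR', X', hX', i', p', h', hT', -⟩ ψ
  obtain ⟨χ, rfl⟩ := Triangle.yoneda_exact₂ _ hT' ψ (h𝓡 R' hR' R hR (i' ≫ ψ))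
  obtain ⟨ω, rfl⟩ := hh X' hX' χ
  exact ⟨p' ≫ ω, Category.assoc p' ω h⟩

theorem exists_bongartzObjects_isRightApprox {A : C} (hA : A ∈ twoTerm 𝓡)
    (hA𝓧 : A ∈ extRightPerp 𝓧) (h𝓧 : ContravariantlyFinite 𝓧) :
    ∃ E ∈ bongartzObjects 𝓡 𝓧, ∃ e : E ⟶ A,
      IsRightApprox (extLeftPerp (bongartzObjects 𝓡 𝓧)) e := by
  obtain ⟨R₀, hR₀, B, ⟨R₁, hR₁, ⟨ι⟩⟩, f, w, r, hT⟩ := hA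
  obtain ⟨X, hX, g, hg⟩ := h𝓧 (R₁⟦(1 : ℤ)⟧)
  obtain ⟨U, i, p, hU⟩ := distinguished_cocone_triangle₂ g
  have hU𝓑 : U ∈ bongartzObjects 𝓡 𝓧 := ⟨R₁, hR₁, X, hX, i, p, g, hU, hg⟩
  have hg_perp : IsRightApprox (extLeftPerp (bongartzObjects 𝓡 𝓧)) g :=
    isRightApprox_mor₂ (rot_of_distTriang _ hU) (subset_extRightPerp_extLeftPerp hU𝓑)
  have hr : IsRightApprox 𝓧 r := isRightApprox_mor₂ (rot_of_distTriang _ hT) hA𝓧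
  obtain ⟨E, j, q, e, hE, -, hlift⟩ := exists_distTriang_weakPullback hT (g ≫ ι.inv)
  refine ⟨E, ⟨R₀, hR₀, X, hX, j, q, _, hE, (hg.comp_iso ι.symm).comp hr⟩, e, fun N hN a => ?_⟩
  obtain ⟨b, hb⟩ := hg_perp.comp_iso ι.symm N hN (a ≫ w)
  obtain ⟨s, hs, -⟩ := hlift a b hb.symm
  exact ⟨s, hs⟩

theorem mem_bongartzCompletion {M : C} (hM : M ∈ twoTerm 𝓡) (h𝓧 : ContravariantlyFinite 𝓧)
    (hM𝓧 : M ∈ extRightPerp 𝓧) (hM𝓑 : M ∈ extLeftPerp (bongartzObjects 𝓡 𝓧)) :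
    M ∈ bongartzCompletion 𝓡 𝓧 :=
  let ⟨E, hE, _, he⟩ := exists_bongartzObjects_isRightApprox hM hM𝓧 h𝓧
  ⟨E, hE, he.isRetractOf hM𝓑⟩

theorem subset_bongartzCompletion (h𝓡 : ∀ A, A ∈ twoTerm 𝓡) (h𝓧 : IsRigidSubcat 𝓧)
    (hfin : ContravariantlyFinite 𝓧) : 𝓧 ⊆ bongartzCompletion 𝓡 𝓧 :=
  fun X hX => mem_bongartzCompletion (h𝓡 X) hfin (isRigidSubcat_iff_subset_extRightPerp.1 h𝓧 hX)
    (subset_extLeftPerp_iff.2 (bongartzObjects_subset_extRightPerp h𝓧) hX)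

theorem isRigidSubcat_bongartzCompletion (hsymm : ExtVanishingSymmetric C)
    (h𝓡 : IsRigidSubcat 𝓡) (h𝓧 : IsRigidSubcat 𝓧) :
    IsRigidSubcat (bongartzCompletion 𝓡 𝓧) := by
  have completion_subset {𝓢 : Set C} (h : bongartzObjects 𝓡 𝓧 ⊆ extRightPerp 𝓢) :
      bongartzCompletion 𝓡 𝓧 ⊆ extRightPerp 𝓢 :=
    fun M ⟨U, hU, hM⟩ => mem_extRightPerp_of_isRetractOf (h hU) hM
  refine isRigidSubcat_iff_subset_extRightPerp.2 (completion_subset ?_)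
  rw [← hsymm.extLeftPerp_eq, subset_extLeftPerp_iff]
  exact completion_subset
    (isRigidSubcat_iff_subset_extRightPerp.1 (isRigidSubcat_bongartzObjects hsymm h𝓡 h𝓧))

theorem bongartzCompletion_eq_extRightPerp (hsymm : ExtVanishingSymmetric C)
    (h𝓡 : IsRigidSubcat 𝓡) (h𝓡two : ∀ A, A ∈ twoTerm 𝓡) (h𝓧 : IsRigidSubcat 𝓧)
    (hfin : ContravariantlyFinite 𝓧) :
    bongartzCompletion 𝓡 𝓧 = extRightPerp (bongartzCompletion 𝓡 𝓧) := by
  have hrigid := isRigidSubcat_bongartzCompletion hsymm h𝓡 h𝓧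
  refine (isRigidSubcat_iff_subset_extRightPerp.1 hrigid).antisymm fun M hM =>
    mem_bongartzCompletion (h𝓡two M) hfin ?_ ?_
  · exact fun X hX => hM X (subset_bongartzCompletion h𝓡two h𝓧 hfin hX)
  · rw [hsymm.extLeftPerp_eq]
    exact fun U hU => hM U (bongartzObjects_subset_bongartzCompletion hU)

theorem contravariantlyFinite_bongartzCompletion (hsymm : ExtVanishingSymmetric C)
    (h𝓡 : IsRigidSubcat 𝓡) (h𝓡two : ∀ A, A ∈ twoTerm 𝓡) (h𝓧 : IsRigidSubcat 𝓧)
    (hfin : FunctoriallyFinite 𝓧) : ContravariantlyFinite (bongartzCompletion 𝓡 𝓧) := by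
  have hrigid := isRigidSubcat_bongartzCompletion hsymm h𝓡 h𝓧
  have h𝓧_perp : bongartzCompletion 𝓡 𝓧 ⊆ extLeftPerp 𝓧 :=
    fun M hM X hX => hrigid M hM X (subset_bongartzCompletion h𝓡two h𝓧 hfin.1 hX)
  have h𝓑_perp : bongartzCompletion 𝓡 𝓧 ⊆ extLeftPerp (bongartzObjects 𝓡 𝓧) :=
    fun M hM U hU => hrigid M hM U (bongartzObjects_subset_bongartzCompletion hU)
  intro A
  obtain ⟨Z, hZ, q, hq⟩ := contravariantlyFinite_extLeftPerp h𝓧 hfin.2 A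
  rw [hsymm.extLeftPerp_eq] at hZ
  obtain ⟨E, hE, e, he⟩ := exists_bongartzObjects_isRightApprox (h𝓡two Z) hZ hfin.1
  exact ⟨E, bongartzObjects_subset_bongartzCompletion hE, e ≫ q,
    (he.mono h𝓑_perp).comp (hq.mono h𝓧_perp)⟩

end Bongartz

theorem exists_clusterTilting_containing_rigid_general (hsymm : ExtVanishingSymmetric C)
    {𝓡 : Set C} (h𝓡 : IsClusterTilting 𝓡) {𝓧 : Set C} (h𝓧 : IsRigidSubcat 𝓧)
    (hfin : FunctoriallyFinite 𝓧) :
    ∃ 𝓨 : Set C, IsSubcat 𝓨 ∧ IsClusterTilting 𝓨 ∧ 𝓧 ⊆ 𝓨 := by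
  have h𝓡orth : 𝓡 = extRightPerp 𝓡 := Set.ext h𝓡.2.1
  have h𝓡rigid : IsRigidSubcat 𝓡 := isRigidSubcat_iff_subset_extRightPerp.2 h𝓡orth.le
  have h𝓡two : ∀ A, A ∈ twoTerm 𝓡 := mem_twoTerm_of_eq_extRightPerp h𝓡orth h𝓡.1.1
  have horth := bongartzCompletion_eq_extRightPerp hsymm h𝓡rigid h𝓡two h𝓧 hfin.1
  exact ⟨bongartzCompletion 𝓡 𝓧, horth ▸ isSubcat_extRightPerp _,
    isClusterTilting_of_eq_extRightPerp hsymm horth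
      (contravariantlyFinite_bongartzCompletion hsymm h𝓡rigid h𝓡two h𝓧 hfin),
    subset_bongartzCompletion h𝓡two h𝓧 hfin.1⟩

/-- **Corollary (Statement 7).** Let `C` be a 2-Calabi–Yau triangulated category with a
cluster tilting subcategory `𝓡`, and let `𝓧` be a functorially finite rigid subcategory.
Then `C` has a cluster tilting subcategory `𝓨` containing `𝓧`. -/
theorem exists_clusterTilting_containing_rigid
    (k : Type*) [Field k] [IsAlgClosed k] [Linear k C]
    [∀ X Y : C, FiniteDimensional k (X ⟶ Y)] [IsIdempotentComplete C]
    (h2CY : IsTwoCalabiYau (C := C) k)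
    (𝓡 : Set C) (h𝓡sub : IsSubcat 𝓡) (h𝓡ct : IsClusterTilting 𝓡)
    (𝓧 : Set C) (h𝓧sub : IsSubcat 𝓧) (h𝓧rig : IsRigidSubcat 𝓧)
    (h𝓧ff : FunctoriallyFinite 𝓧) :
    ∃ 𝓨 : Set C, IsSubcat 𝓨 ∧ IsClusterTilting 𝓨 ∧ 𝓧 ⊆ 𝓨 :=
  exists_clusterTilting_containing_rigid_general h2CY.extVanishingSymmetric h𝓡ct h𝓧rig h𝓧ff
end

section
/- Let R be a presilting subcategory of C and X a subcategory of C contained in R∗R[1]. Then Hom_C(X, X'[i]) = 0 for all X, X' ∈ X and all integers i > 1. -/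
/-!
Setting: `C` is a Hom-finite Krull–Schmidt `k`-linear triangulated category over an
algebraically closed field `k` (Krull–Schmidt is encoded as Hom-finiteness together with
idempotent completeness). Subcategories are identified with their classes of objects and
are always assumed full, closed under isomorphisms, direct sums and direct summands.
-/

open CategoryTheory CategoryTheory.Limits CategoryTheory.Pretriangulated Opposite

universe v u

variable {C : Type u} [Category.{v} C] [Preadditive C] [HasZeroObject C] [HasShift C ℤ]
  [∀ n : ℤ, (shiftFunctor C n).Additive] [Pretriangulated C]

/-- `𝓢` is presilting: `Hom(S, S'⟦i⟧) = 0` for all `S, S' ∈ 𝓢` and `i > 0`. -/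
def IsPresilting (𝓢 : Set C) : Prop :=
  ∀ S ∈ 𝓢, ∀ S' ∈ 𝓢, ∀ i : ℤ, 0 < i → ∀ φ : S ⟶ S'⟦i⟧, φ = 0

/-- A thick subcategory: closed under isomorphisms, shifts, cones and direct summands. -/
def IsThickSubcat (S : Set C) : Prop :=
  (∀ ⦃X Y : C⦄, (X ≅ Y) → X ∈ S → Y ∈ S) ∧
  (∀ X ∈ S, ∀ n : ℤ, X⟦n⟧ ∈ S) ∧
  (∀ T : Triangle C, T ∈ (distTriang C) → T.obj₁ ∈ S → T.obj₂ ∈ S → T.obj₃ ∈ S) ∧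
  (∀ ⦃X Y : C⦄, X ∈ S → IsRetractOf Y X → Y ∈ S)

/-- `thick 𝓢`: the smallest thick subcategory containing `𝓢`. -/
def thickClosure (𝓢 : Set C) : Set C := ⋂₀ {T | IsThickSubcat T ∧ 𝓢 ⊆ T}

/-- `𝓢` is silting: presilting and `thick 𝓢 = C`. -/
def IsSilting (𝓢 : Set C) : Prop := IsPresilting 𝓢 ∧ thickClosure 𝓢 = Set.univ

/-!
Hom-vanishing passes to extensions in either variable. A map from an object of `𝓡 ∗ 𝓡[1]` to one
of `(𝓡 ∗ 𝓡[1])[i] ⊆ 𝓡[i] ∗ 𝓡[i + 1]` is therefore controlled by maps from `𝓡` or `𝓡[1]` to `𝓡[i]`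
or `𝓡[i + 1]`, and for `i > 1` all of these raise the degree, so they vanish by presilting.
-/

section HomOrthogonal

variable {D : Type*} [Category D] [HasZeroMorphisms D]

/-- `Hom(𝓐, 𝓑) = 0`. This is the symmetric form, for classes of objects, of Mathlib's
`ObjectProperty.leftOrthogonal` and `ObjectProperty.rightOrthogonal`. -/
def HomOrthogonal (𝓐 𝓑 : Set D) : Prop :=
  ∀ A ∈ 𝓐, ∀ B ∈ 𝓑, ∀ φ : A ⟶ B, φ = 0

namespace HomOrthogonal

variable {𝓐 𝓐' 𝓑 𝓑' : Set D}

lemma mono_left (h : HomOrthogonal 𝓐 𝓑) (h𝓐 : 𝓐' ⊆ 𝓐) : HomOrthogonal 𝓐' 𝓑 :=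
  fun A hA ↦ h A (h𝓐 hA)

lemma mono_right (h : HomOrthogonal 𝓐 𝓑) (h𝓑 : 𝓑' ⊆ 𝓑) : HomOrthogonal 𝓐 𝓑' :=
  fun A hA B hB ↦ h A hA B (h𝓑 hB)

end HomOrthogonal

end HomOrthogonal

section Shift

variable {D : Type*} [Category D] [HasShift D ℤ] {𝓐 𝓑 𝓢 : Set D}

lemma shift_mem_shiftSet {X : D} (hX : X ∈ 𝓢) (n : ℤ) : X⟦n⟧ ∈ shiftSet 𝓢 n :=
  ⟨X, hX, ⟨Iso.refl _⟩⟩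

lemma subset_shiftSet_zero (𝓢 : Set D) : 𝓢 ⊆ shiftSet 𝓢 0 :=
  fun X hX ↦ ⟨X, hX, ⟨((shiftFunctorZero D ℤ).app X).symm⟩⟩

lemma shiftSet_shiftSet (𝓢 : Set D) (m n : ℤ) :
    shiftSet (shiftSet 𝓢 m) n = shiftSet 𝓢 (m + n) := by
  ext X
  constructor
  · rintro ⟨Y, ⟨Z, hZ, ⟨eY⟩⟩, ⟨eX⟩⟩
    exact ⟨Z, hZ, ⟨eX ≪≫ (shiftFunctor D n).mapIso eY ≪≫ ((shiftFunctorAdd D m n).app Z).symm⟩⟩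
  · rintro ⟨Z, hZ, ⟨e⟩⟩
    exact ⟨Z⟦m⟧, shift_mem_shiftSet hZ m, ⟨e ≪≫ (shiftFunctorAdd D m n).app Z⟩⟩

lemma HomOrthogonal.shift [HasZeroMorphisms D] (h : HomOrthogonal 𝓐 𝓑) (n : ℤ) :
    HomOrthogonal (shiftSet 𝓐 n) (shiftSet 𝓑 n) := by
  rintro X ⟨A, hA, ⟨eX⟩⟩ Y ⟨B, hB, ⟨eY⟩⟩ φ
  obtain ⟨θ, hθ⟩ := (shiftFunctor D n).map_surjective (eX.inv ≫ φ ≫ eY.hom)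
  rw [h A hA B hB θ, Functor.map_zero] at hθ
  rw [← cancel_epi eX.inv, ← cancel_mono eY.hom]
  simpa using hθ.symm

lemma IsPresilting.homOrthogonal_shiftSet [Preadditive D] (h𝓢 : IsPresilting 𝓢) {m n : ℤ}
    (hmn : m < n) : HomOrthogonal (shiftSet 𝓢 m) (shiftSet 𝓢 n) := by
  have orthogonal_sub : HomOrthogonal 𝓢 (shiftSet 𝓢 (n - m)) := by
    rintro S hS Y ⟨S', hS', ⟨e⟩⟩ φ
    simpa using h𝓢 S hS S' hS' (n - m) (sub_pos.mpr hmn) (φ ≫ e.hom)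
  simpa only [shiftSet_shiftSet, sub_add_cancel] using orthogonal_sub.shift m

end Shift

section Extension

variable {𝓐 𝓑 𝓩 : Set C}

lemma starSet_subset_of_isTriangulatedClosed₂ {P : ObjectProperty C} [P.IsTriangulatedClosed₂]
    [P.IsClosedUnderIsomorphisms] (h𝓐 : 𝓐 ⊆ {X | P X}) (h𝓑 : 𝓑 ⊆ {X | P X}) :
    starSet 𝓐 𝓑 ⊆ {X | P X} := by
  rintro M ⟨A, hA, B, hB, f, g, h, hT⟩
  exact P.ext_of_isTriangulatedClosed₂ _ hT (h𝓐 hA) (h𝓑 hB)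

lemma HomOrthogonal.starSet_left (h𝓐 : HomOrthogonal 𝓐 𝓩) (h𝓑 : HomOrthogonal 𝓑 𝓩) :
    HomOrthogonal (starSet 𝓐 𝓑) 𝓩 := by
  let P : ObjectProperty C := ObjectProperty.leftOrthogonal (· ∈ 𝓩)
  have star_le : starSet 𝓐 𝓑 ⊆ {X | P X} := starSet_subset_of_isTriangulatedClosed₂
    (fun A hA Z φ hZ ↦ h𝓐 A hA Z hZ φ) (fun B hB Z φ hZ ↦ h𝓑 B hB Z hZ φ)
  exact fun M hM Z hZ φ ↦ star_le hM φ hZ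

lemma HomOrthogonal.starSet_right (h𝓐 : HomOrthogonal 𝓩 𝓐) (h𝓑 : HomOrthogonal 𝓩 𝓑) :
    HomOrthogonal 𝓩 (starSet 𝓐 𝓑) := by
  let P : ObjectProperty C := ObjectProperty.rightOrthogonal (· ∈ 𝓩)
  have star_le : starSet 𝓐 𝓑 ⊆ {X | P X} := starSet_subset_of_isTriangulatedClosed₂
    (fun A hA Z φ hZ ↦ h𝓐 Z hZ A hA φ) (fun B hB Z φ hZ ↦ h𝓑 Z hZ B hB φ)
  exact fun Z hZ M hM φ ↦ star_le hM φ hZ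

lemma mem_starSet_of_iso {T : Triangle C} (hT : T ∈ distTriang C) (h₁ : T.obj₁ ∈ 𝓐)
    (h₃ : T.obj₃ ∈ 𝓑) {M : C} (e : M ≅ T.obj₂) : M ∈ starSet 𝓐 𝓑 := by
  have comm₁ : (T.mor₁ ≫ e.inv) ≫ e.hom = 𝟙 T.obj₁ ≫ T.mor₁ := by simp
  have comm₃ : T.mor₃ ≫ (𝟙 T.obj₁)⟦1⟧' = 𝟙 T.obj₃ ≫ T.mor₃ := by simp
  let T' : Triangle C := Triangle.mk (T.mor₁ ≫ e.inv) (e.hom ≫ T.mor₂) T.mor₃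
  let e' : T' ≅ T :=
    Triangle.isoMk T' T (Iso.refl T.obj₁) e (Iso.refl T.obj₃) comm₁ (Category.comp_id _) comm₃
  exact ⟨T.obj₁, h₁, T.obj₃, h₃, _, _, _, isomorphic_distinguished T hT T' e'⟩

lemma shiftSet_starSet_subset (𝓐 𝓑 : Set C) (n : ℤ) :
    shiftSet (starSet 𝓐 𝓑) n ⊆ starSet (shiftSet 𝓐 n) (shiftSet 𝓑 n) := by
  rintro X ⟨M, ⟨A, hA, B, hB, f, g, h, hT⟩, ⟨e⟩⟩
  exact mem_starSet_of_iso (Triangle.shift_distinguished _ hT n) (shift_mem_shiftSet hA n)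
    (shift_mem_shiftSet hB n) e

lemma shiftSet_twoTerm_subset (𝓡 : Set C) (n : ℤ) :
    shiftSet (twoTerm 𝓡) n ⊆ starSet (shiftSet 𝓡 n) (shiftSet 𝓡 (1 + n)) := by
  simpa only [twoTerm, shiftSet_shiftSet] using shiftSet_starSet_subset 𝓡 (shiftSet 𝓡 1) n

end Extension

theorem hom_shift_eq_zero_of_twoTerm_general {𝓡 : Set C} (h𝓡 : IsPresilting 𝓡) {X X' : C}
    (hX : X ∈ twoTerm 𝓡) (hX' : X' ∈ twoTerm 𝓡) {i : ℤ} (hi : 1 < i) (φ : X ⟶ X'⟦i⟧) :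
    φ = 0 := by
  have orthogonal_of_lt {m : ℤ} (hm : m < i) :
      HomOrthogonal (shiftSet 𝓡 m) (shiftSet (twoTerm 𝓡) i) :=
    (HomOrthogonal.starSet_right (h𝓡.homOrthogonal_shiftSet hm)
      (h𝓡.homOrthogonal_shiftSet (by lia))).mono_right (shiftSet_twoTerm_subset 𝓡 i)
  have orthogonal_zero : HomOrthogonal 𝓡 (shiftSet (twoTerm 𝓡) i) :=
    (orthogonal_of_lt (by lia)).mono_left (subset_shiftSet_zero 𝓡)
  exact orthogonal_zero.starSet_left (orthogonal_of_lt hi) X hX _ (shift_mem_shiftSet hX' i) φ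

/-- **Lemma (Statement 12).** Let `𝓡` be a presilting subcategory of `C` and
`𝓧 ⊆ 𝓡 ∗ 𝓡[1]` a subcategory. Then `Hom_C(X, X'⟦i⟧) = 0` for all `X, X' ∈ 𝓧` and all
integers `i > 1`. -/
theorem hom_shift_eq_zero_of_twoTerm
    (k : Type*) [Field k] [IsAlgClosed k] [Linear k C]
    [∀ X Y : C, FiniteDimensional k (X ⟶ Y)] [IsIdempotentComplete C]
    (𝓡 𝓧 : Set C) (h𝓡sub : IsSubcat 𝓡) (h𝓡 : IsPresilting 𝓡)
    (h𝓧sub : IsSubcat 𝓧) (h𝓧tt : 𝓧 ⊆ twoTerm 𝓡) :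
    ∀ X ∈ 𝓧, ∀ X' ∈ 𝓧, ∀ i : ℤ, 1 < i → ∀ φ : X ⟶ X'⟦i⟧, φ = 0 :=
  fun _ hX _ hX' _ hi φ ↦ hom_shift_eq_zero_of_twoTerm_general h𝓡 (h𝓧tt hX) (h𝓧tt hX') hi φ
end

section
/- Let R be a silting subcategory of C and X a subcategory of C contained in R∗R[1]. Then X is a two-term weak R[1]-cluster tilting subcategory of C if and only if X is a silting subcategory of C. -/
/-!
Setting: `C` is a Hom-finite Krull–Schmidt `k`-linear triangulated category over an
algebraically closed field `k` (Krull–Schmidt is encoded as Hom-finiteness together with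
idempotent completeness). Subcategories are identified with their classes of objects and
are always assumed full, closed under isomorphisms, direct sums and direct summands.
-/

open CategoryTheory CategoryTheory.Limits CategoryTheory.Pretriangulated Opposite

universe v u

variable {C : Type u} [Category.{v} C] [Preadditive C] [HasZeroObject C] [HasShift C ℤ]
  [∀ n : ℤ, (shiftFunctor C n).Additive] [Pretriangulated C]

/-!
A morphism `M ⟶ N⟦1⟧` between objects of `𝓡 ∗ 𝓡[1]` always factors through `𝓡[1]`, and
`Hom(M, N⟦i⟧) = 0` for `i ≥ 2`. Hence the relative orthogonality conditions on two-term objects say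
that all positive extensions vanish, and `𝓡 ⊆ 𝓧[-1] ∗ 𝓧` gives `thick 𝓡 ⊆ thick 𝓧`.

Conversely, let `E` be presilting and `M ∈ thick E` with `Hom(M, E⟦i⟧) = 0` for `i > 0`. If
`Hom(E, P⟦i⟧) = 0` for `i > 0`, complete a right `add E`-approximation to a triangle
`E' ⟶ P ⟶ P'⟦1⟧ ⟶ E'⟦1⟧`; the approximation property gives `Hom(E, P'⟦i⟧) = 0` for `i > 0` again,
while `Hom(M, P⟦i⟧)` embeds into `Hom(M, P'⟦i + 1⟧)`. Iterating moves `i` beyond the bound coming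
from the finitely many cones that build `M` from `E`, so `Hom(M, P⟦i⟧) = 0` for `i > 0`. If moreover
`P = M`, then `Hom(M, P'⟦1⟧) = 0`, so the approximation `E' ⟶ M` splits and `M ∈ add E`. Applied to
the cone of a left approximation of an object of `𝓡`, this criterion yields `𝓡 ⊆ 𝓧[-1] ∗ 𝓧`;
applied to two-term objects it yields the maximality of `𝓧`.
-/

section Additive

variable {D : Type*} [Category D] [Preadditive D]

theorem IsSubcat.biprod_mem [HasBinaryBiproducts D] {S : Set D} (hS : IsSubcat S) {X Y : D}
    (hX : X ∈ S) (hY : Y ∈ S) : (X ⊞ Y) ∈ S :=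
  hS.2.1 hX hY ⟨biprod.inl, biprod.inr, biprod.fst, biprod.snd, by simp⟩

theorem isSubcat_of_biprod_of_retract [HasBinaryBiproducts D] {S : Set D}
    (hbiprod : ∀ ⦃X Y : D⦄, X ∈ S → Y ∈ S → (X ⊞ Y) ∈ S)
    (hretract : ∀ ⦃X Y : D⦄, X ∈ S → IsRetractOf Y X → Y ∈ S) : IsSubcat S := by
  refine ⟨fun X Y e hX => hretract hX ⟨e.inv, e.hom, e.inv_hom_id⟩, ?_, hretract⟩
  rintro F G T hF hG ⟨i, j, p, q, -, -, -, -, htotal⟩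
  exact hretract (hbiprod hF hG)
    ⟨biprod.lift p q, biprod.desc i j, by rw [biprod.lift_desc, htotal]⟩

theorem IsSubcat.biproduct_mem_of_const [HasFiniteBiproducts D] {S : Set D}
    (hS : IsSubcat S) {E : D} (hE : E ∈ S) (n : ℕ) : (⨁ fun _ : Fin n => E) ∈ S := by
  induction n with
  | zero => exact hS.2.2 hE ⟨0, 0, by ext i; exact i.elim0⟩
  | succ n ih =>
    let F : Fin (n + 1) → D := fun _ => E
    refine hS.2.1 hE ih ⟨biproduct.ι F 0, biproduct.desc fun i => biproduct.ι F i.succ,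
      biproduct.π F 0, biproduct.lift fun i => biproduct.π F i.succ, ?_, ?_, ?_, ?_, ?_⟩
    · exact biproduct.ι_π_self F 0
    · ext i j
      simp [F, biproduct.ι_π]
    · ext i
      simp [F, biproduct.ι_π_ne F (Fin.succ_ne_zero i).symm]
    · ext i
      simp [F, biproduct.ι_π_ne F (Fin.succ_ne_zero i)]
    · rw [biproduct.lift_desc, ← Fin.sum_univ_succ fun i => biproduct.π F i ≫ biproduct.ι F i]
      exact biproduct.total

/-- `add E`: the smallest subcategory containing the object `E`. -/
def addClosure (E : D) : Set D := ⋂₀ {S | IsSubcat S ∧ E ∈ S}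

theorem addClosure_subset {S : Set D} (hS : IsSubcat S) {E : D} (hE : E ∈ S) :
    addClosure E ⊆ S :=
  fun _ hX => hX S ⟨hS, hE⟩

theorem isSubcat_addClosure (E : D) : IsSubcat (addClosure E) :=
  ⟨fun _ _ e hX S hS => hS.1.1 e (hX S hS),
    fun _ _ _ hF hG hT S hS => hS.1.2.1 (hF S hS) (hG S hS) hT,
    fun _ _ hX hY S hS => hS.1.2.2 (hX S hS) hY⟩

theorem self_mem_addClosure (E : D) : E ∈ addClosure E := fun _ hS => hS.2

theorem IsRightApprox.of_singleton [HasBinaryBiproducts D] {E X A : D} {f : X ⟶ A}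
    (hf : IsRightApprox {E} f) : IsRightApprox (addClosure E) f := by
  have hsub : IsSubcat {Y | ∀ g : Y ⟶ A, ∃ h : Y ⟶ X, h ≫ f = g} := by
    refine isSubcat_of_biprod_of_retract (fun Y Z hY hZ g => ?_) ?_
    · obtain ⟨u, hu⟩ := hY (biprod.inl ≫ g)
      obtain ⟨v, hv⟩ := hZ (biprod.inr ≫ g)
      exact ⟨biprod.desc u v, by ext <;> simp [hu, hv]⟩
    · rintro Y Z hY ⟨s, r, hsr⟩ g
      obtain ⟨u, hu⟩ := hY (r ≫ g)
      exact ⟨s ≫ u, by rw [Category.assoc, hu, ← Category.assoc, hsr, Category.id_comp]⟩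
  exact addClosure_subset hsub (hf E rfl)

theorem IsLeftApprox.of_singleton [HasBinaryBiproducts D] {E X A : D} {f : A ⟶ X}
    (hf : IsLeftApprox {E} f) : IsLeftApprox (addClosure E) f := by
  have hsub : IsSubcat {Y | ∀ g : A ⟶ Y, ∃ h : X ⟶ Y, f ≫ h = g} := by
    refine isSubcat_of_biprod_of_retract (fun Y Z hY hZ g => ?_) ?_
    · obtain ⟨u, hu⟩ := hY (g ≫ biprod.fst)
      obtain ⟨v, hv⟩ := hZ (g ≫ biprod.snd)
      exact ⟨biprod.lift u v, by ext <;> simp [hu, hv]⟩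
    · rintro Y Z hY ⟨s, r, hsr⟩ g
      obtain ⟨u, hu⟩ := hY (g ≫ s)
      exact ⟨u ≫ r, by rw [← Category.assoc, hu, Category.assoc, hsr, Category.comp_id]⟩
  exact addClosure_subset hsub (hf E rfl)

section HomFinite

variable [HasFiniteBiproducts D] (k : Type*) [Semiring k] [Linear k D] {E : D}

theorem contravariantlyFinite_addClosure [∀ A : D, Module.Finite k (E ⟶ A)] :
    ContravariantlyFinite (addClosure E) := by
  intro A
  have := hasBinaryBiproducts_of_finite_biproducts D
  obtain ⟨n, s, hs⟩ := Module.Finite.exists_fin (R := k) (M := E ⟶ A)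
  refine ⟨⨁ fun _ : Fin n => E,
    (isSubcat_addClosure E).biproduct_mem_of_const (self_mem_addClosure E) n, biproduct.desc s,
    .of_singleton ?_⟩
  rintro _ rfl g
  have hg : g ∈ Submodule.span k (Set.range s) := hs ▸ Submodule.mem_top
  obtain ⟨c, rfl⟩ := (Submodule.mem_span_range_iff_exists_fun k).1 hg
  exact ⟨biproduct.lift fun i => c i • 𝟙 _, by simp [biproduct.lift_desc]⟩

theorem covariantlyFinite_addClosure [∀ A : D, Module.Finite k (A ⟶ E)] :
    CovariantlyFinite (addClosure E) := by
  intro A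
  have := hasBinaryBiproducts_of_finite_biproducts D
  obtain ⟨n, s, hs⟩ := Module.Finite.exists_fin (R := k) (M := A ⟶ E)
  refine ⟨⨁ fun _ : Fin n => E,
    (isSubcat_addClosure E).biproduct_mem_of_const (self_mem_addClosure E) n, biproduct.lift s,
    .of_singleton ?_⟩
  rintro _ rfl g
  have hg : g ∈ Submodule.span k (Set.range s) := hs ▸ Submodule.mem_top
  obtain ⟨c, rfl⟩ := (Submodule.mem_span_range_iff_exists_fun k).1 hg
  exact ⟨biproduct.desc fun i => c i • 𝟙 _, by simp [biproduct.lift_desc]⟩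

end HomFinite

end Additive

section HomVanishesFrom

variable {D : Type*} [Category D] [Preadditive D] [HasShift D ℤ]

/-- `Hom(A, B⟦i⟧) = 0` for all `i ≥ n`. Presilting is the case `n = 1`; general `n` keeps track
of the degree in arguments along triangles and shifts. -/
def HomVanishesFrom (A B : D) (n : ℤ) : Prop := ∀ i, n ≤ i → ∀ f : A ⟶ B⟦i⟧, f = 0

namespace HomVanishesFrom

variable {A A' B B' : D} {m n : ℤ}

theorem mono (h : HomVanishesFrom A B m) (hmn : m ≤ n) : HomVanishesFrom A B n :=
  fun i hi => h i (hmn.trans hi)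

theorem of_succ (h : HomVanishesFrom A B (n + 1)) (hn : ∀ f : A ⟶ B⟦n⟧, f = 0) :
    HomVanishesFrom A B n := by
  intro i hi
  obtain rfl | hlt := hi.eq_or_lt
  exacts [hn, h i hlt]

theorem of_one (h : HomVanishesFrom A B 1) (h0 : ∀ f : A ⟶ B, f = 0) : HomVanishesFrom A B 0 :=
  of_succ h fun f =>
    (Preadditive.IsIso.comp_right_eq_zero f ((shiftFunctorZero D ℤ).hom.app B)).1 (h0 _)

theorem eq_zero (h : HomVanishesFrom A B 0) (f : A ⟶ B) : f = 0 :=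
  (Preadditive.IsIso.comp_right_eq_zero f ((shiftFunctorZero D ℤ).inv.app B)).1 (h 0 le_rfl _)

theorem of_retract_left (h : HomVanishesFrom A B n) (hA : IsRetractOf A' A) :
    HomVanishesFrom A' B n := by
  obtain ⟨s, r, hsr⟩ := hA
  intro i hi f
  rw [← Category.id_comp f, ← hsr, Category.assoc, h i hi (r ≫ f), comp_zero]

theorem of_iso_left (h : HomVanishesFrom A B n) (e : A' ≅ A) : HomVanishesFrom A' B n :=
  h.of_retract_left ⟨e.hom, e.inv, e.hom_inv_id⟩

theorem of_retract_right (h : HomVanishesFrom A B n) (hB : IsRetractOf B' B) :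
    HomVanishesFrom A B' n := by
  obtain ⟨s, r, hsr⟩ := hB
  intro i hi f
  rw [← Category.comp_id f, ← (shiftFunctor D i).map_id, ← hsr, Functor.map_comp,
    ← Category.assoc, h i hi (f ≫ s⟦i⟧'), zero_comp]

end HomVanishesFrom

variable {A B : D} {m n p : ℤ}

theorem homVanishesFrom_shift_right_iff (hp : m + n = p) :
    HomVanishesFrom A (B⟦m⟧) n ↔ HomVanishesFrom A B p := by
  constructor
  · intro h i hi f
    let e := (shiftFunctorAdd' D m (i - m) i (by ring)).app B
    exact (Preadditive.IsIso.comp_right_eq_zero f e.hom).1 (h (i - m) (by linarith) _)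
  · intro h i hi f
    let e := (shiftFunctorAdd' D m i (m + i) rfl).app B
    exact (Preadditive.IsIso.comp_right_eq_zero f e.inv).1 (h (m + i) (by linarith) _)

theorem homVanishesFrom_shift_left_iff [∀ n : ℤ, (shiftFunctor D n).Additive] (hp : p + m = n) :
    HomVanishesFrom (A⟦m⟧) B n ↔ HomVanishesFrom A B p := by
  constructor
  · intro h i hi f
    let e := (shiftFunctorAdd' D i m (i + m) rfl).app B
    exact ((shiftFunctor D m).map_eq_zero_iff).1
      ((Preadditive.IsIso.comp_right_eq_zero _ e.inv).1 (h (i + m) (by linarith) _))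
  · intro h i hi f
    let e := (shiftFunctorAdd' D (i - m) m i (by ring)).app B
    obtain ⟨g, hg⟩ := (shiftFunctor D m).map_surjective (f ≫ e.hom)
    rw [h (i - m) (by linarith) g, Functor.map_zero] at hg
    exact (Preadditive.IsIso.comp_right_eq_zero f e.hom).1 hg.symm

theorem IsPresilting.homVanishesFrom {S : Set D} (hS : IsPresilting S) {X Y : D} (hX : X ∈ S)
    (hY : Y ∈ S) : HomVanishesFrom X Y 1 :=
  hS X hX Y hY

end HomVanishesFrom

namespace HomVanishesFrom

section Triangle

variable {T : Triangle C} {A B : C} {n : ℤ}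

theorem obj₂_right (hT : T ∈ distTriang C) (h₁ : HomVanishesFrom A T.obj₁ n)
    (h₃ : HomVanishesFrom A T.obj₃ n) : HomVanishesFrom A T.obj₂ n := by
  intro i hi f
  obtain ⟨g, hg⟩ :=
    Triangle.coyoneda_exact₂ _ (Triangle.shift_distinguished T hT i) f (h₃ i hi _)
  exact hg.trans ((congrArg (· ≫ _) (h₁ i hi g)).trans zero_comp)

theorem obj₃_right (hT : T ∈ distTriang C) (h₁ : HomVanishesFrom A T.obj₁ (n + 1))
    (h₂ : HomVanishesFrom A T.obj₂ n) : HomVanishesFrom A T.obj₃ n :=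
  obj₂_right (rot_of_distTriang _ hT) h₂ ((homVanishesFrom_shift_right_iff (add_comm 1 n)).2 h₁)

theorem obj₂_left (hT : T ∈ distTriang C) (h₁ : HomVanishesFrom T.obj₁ B n)
    (h₃ : HomVanishesFrom T.obj₃ B n) : HomVanishesFrom T.obj₂ B n := by
  intro i hi f
  obtain ⟨g, rfl⟩ := Triangle.yoneda_exact₂ _ hT f (h₁ i hi _)
  rw [h₃ i hi g, comp_zero]

theorem obj₃_left (hT : T ∈ distTriang C) (h₁ : HomVanishesFrom T.obj₁ B n)
    (h₂ : HomVanishesFrom T.obj₂ B (n + 1)) : HomVanishesFrom T.obj₃ B (n + 1) :=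
  obj₂_left (rot_of_distTriang _ hT) h₂ ((homVanishesFrom_shift_left_iff rfl).2 h₁)

theorem obj₃_of_isRightApprox {𝓔 : Set C} {E : C} (hT : T ∈ distTriang C)
    (hp : IsRightApprox 𝓔 T.mor₁) (hE : E ∈ 𝓔)
    (h₁ : HomVanishesFrom E T.obj₁ 1) (h₂ : HomVanishesFrom E T.obj₂ 1) :
    HomVanishesFrom E T.obj₃ 0 := by
  refine of_one (obj₃_right hT (h₁.mono (by norm_num)) h₂) fun f => ?_
  obtain ⟨g, rfl⟩ := Triangle.coyoneda_exact₃ T hT f (h₁ 1 le_rfl _)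
  obtain ⟨u, rfl⟩ := hp E hE g
  rw [Category.assoc, comp_distTriang_mor_zero₁₂ T hT, comp_zero]

theorem obj₃_of_isLeftApprox {𝓔 : Set C} {E : C} (hT : T ∈ distTriang C)
    (hp : IsLeftApprox 𝓔 T.mor₁) (hE : E ∈ 𝓔)
    (h₁ : HomVanishesFrom T.obj₁ E 1) (h₂ : HomVanishesFrom T.obj₂ E 1) :
    HomVanishesFrom T.obj₃ E 1 := by
  refine of_succ (obj₃_left hT h₁ (h₂.mono (by norm_num))) fun f => ?_
  obtain ⟨g, rfl⟩ := Triangle.yoneda_exact₃ T hT f (h₂ 1 le_rfl _)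
  obtain ⟨g, rfl⟩ := (shiftFunctor C (1 : ℤ)).map_surjective g
  obtain ⟨u, rfl⟩ := hp E hE g
  rw [Functor.map_comp, ← Category.assoc, comp_distTriang_mor_zero₃₁ T hT, zero_comp]

end Triangle

theorem of_mem_addClosure_right {A E E' : C} {n : ℤ} (h : HomVanishesFrom A E n)
    (hE' : E' ∈ addClosure E) : HomVanishesFrom A E' n := by
  have hsub : IsSubcat {B | HomVanishesFrom A B n} := isSubcat_of_biprod_of_retract
    (fun X Y hX hY => obj₂_right (binaryBiproductTriangle_distinguished X Y) hX hY)
    (fun _ _ => of_retract_right)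
  exact addClosure_subset hsub h hE'

theorem of_mem_addClosure_left {B E E' : C} {n : ℤ} (h : HomVanishesFrom E B n)
    (hE' : E' ∈ addClosure E) : HomVanishesFrom E' B n := by
  have hsub : IsSubcat {A | HomVanishesFrom A B n} := isSubcat_of_biprod_of_retract
    (fun X Y hX hY => obj₂_left (binaryBiproductTriangle_distinguished X Y) hX hY)
    (fun _ _ => of_retract_left)
  exact addClosure_subset hsub h hE'

end HomVanishesFrom

section Thick

theorem IsThickSubcat.mem_obj₂ {S : Set C} (hS : IsThickSubcat S) {T : Triangle C}
    (hT : T ∈ distTriang C) (h₁ : T.obj₁ ∈ S) (h₃ : T.obj₃ ∈ S) : T.obj₂ ∈ S :=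
  hS.2.2.1 _ (inv_rot_of_distTriang T hT) (hS.2.1 _ h₃ (-1)) h₁

theorem IsThickSubcat.isSubcat {S : Set C} (hS : IsThickSubcat S) : IsSubcat S :=
  isSubcat_of_biprod_of_retract
    (fun X Y hX hY => hS.mem_obj₂ (binaryBiproductTriangle_distinguished X Y) hX hY) hS.2.2.2

theorem isThickSubcat_thickClosure (S : Set C) : IsThickSubcat (thickClosure S) :=
  ⟨fun _ _ e hX T hT => hT.1.1 e (hX T hT), fun X hX n T hT => hT.1.2.1 X (hX T hT) n,
    fun t ht h₁ h₂ T hT => hT.1.2.2.1 t ht (h₁ T hT) (h₂ T hT),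
    fun _ _ hX hY T hT => hT.1.2.2.2 (hX T hT) hY⟩

theorem subset_thickClosure (S : Set C) : S ⊆ thickClosure S := fun _ hX _ hT => hT.2 hX

theorem thickClosure_subset {S T : Set C} (hT : IsThickSubcat T) (h : S ⊆ T) :
    thickClosure S ⊆ T :=
  fun _ hX => hX T ⟨hT, h⟩

theorem addClosure_subset_thickClosure (E : C) : addClosure E ⊆ thickClosure {E} :=
  addClosure_subset (isThickSubcat_thickClosure _).isSubcat (subset_thickClosure _ rfl)

theorem thickClosure_singleton_subset_of_retract {E F : C} (h : IsRetractOf E F) :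
    thickClosure {E} ⊆ thickClosure {F} := by
  have hF := isThickSubcat_thickClosure {F}
  exact thickClosure_subset hF
    (Set.singleton_subset_iff.2 (hF.2.2.2 (subset_thickClosure _ rfl) h))

theorem exists_mem_thickClosure_singleton {S : Set C} (hS : IsSubcat S) {M : C}
    (hM : M ∈ thickClosure S) : ∃ E ∈ S, M ∈ thickClosure {E} := by
  refine thickClosure_subset (T := {M | ∃ E ∈ S, M ∈ thickClosure {E}}) ⟨?_, ?_, ?_, ?_⟩
    (fun X hX => ⟨X, hX, subset_thickClosure _ rfl⟩) hM
  · rintro X Y e ⟨E, hE, hX⟩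
    exact ⟨E, hE, (isThickSubcat_thickClosure _).1 e hX⟩
  · rintro X ⟨E, hE, hX⟩ n
    exact ⟨E, hE, (isThickSubcat_thickClosure _).2.1 _ hX n⟩
  · rintro T hT ⟨E, hE, h₁⟩ ⟨F, hF, h₂⟩
    exact ⟨E ⊞ F, hS.biprod_mem hE hF, (isThickSubcat_thickClosure _).2.2.1 T hT
      (thickClosure_singleton_subset_of_retract ⟨biprod.inl, biprod.fst, biprod.inl_fst⟩ h₁)
      (thickClosure_singleton_subset_of_retract ⟨biprod.inr, biprod.snd, biprod.inr_snd⟩ h₂)⟩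
  · rintro X Y ⟨E, hE, hX⟩ hY
    exact ⟨E, hE, (isThickSubcat_thickClosure _).2.2.2 hX hY⟩

theorem exists_homVanishesFrom_add {E M : C} (hM : M ∈ thickClosure {E}) :
    ∃ b : ℤ, ∀ (N : C) (n : ℤ), HomVanishesFrom E N n → HomVanishesFrom M N (n + b) := by
  refine thickClosure_subset
    (T := {M | ∃ b : ℤ, ∀ (N : C) (n : ℤ), HomVanishesFrom E N n → HomVanishesFrom M N (n + b)})
    ⟨?_, ?_, ?_, ?_⟩ ?_ hM
  · rintro X Y e ⟨b, hb⟩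
    exact ⟨b, fun N n h => (hb N n h).of_iso_left e.symm⟩
  · rintro X ⟨b, hb⟩ m
    exact ⟨b + m, fun N n h => (homVanishesFrom_shift_left_iff (add_assoc n b m)).2 (hb N n h)⟩
  · rintro T hT ⟨b₁, hb₁⟩ ⟨b₂, hb₂⟩
    refine ⟨max b₁ b₂ + 1, fun N n h => ?_⟩
    rw [← add_assoc]
    exact .obj₃_left hT ((hb₁ N n h).mono (by gcongr; exact le_max_left ..))
      ((hb₂ N n h).mono (by linarith [le_max_right b₁ b₂]))
  · rintro X Y ⟨b, hb⟩ hY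
    exact ⟨b, fun N n h => (hb N n h).of_retract_left hY⟩
  · rintro _ rfl
    exact ⟨0, fun N n h => by rwa [add_zero]⟩

end Thick

section Presilting

theorem exists_distTriang_homVanishesFrom_zero {E P : C}
    (hfin : ContravariantlyFinite (addClosure E)) (hE : HomVanishesFrom E E 1)
    (hP : HomVanishesFrom E P 1) :
    ∃ T ∈ distTriang C, T.obj₁ ∈ addClosure E ∧ T.obj₂ = P ∧ HomVanishesFrom E T.obj₃ 0 := by
  obtain ⟨E', hE', p, hp⟩ := hfin P
  obtain ⟨Q, g, h, hT⟩ := distinguished_cocone_triangle p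
  exact ⟨_, hT, hE', rfl,
    .obj₃_of_isRightApprox hT hp (self_mem_addClosure E) (hE.of_mem_addClosure_right hE') hP⟩

theorem HomVanishesFrom.of_mem_thickClosure {E M P : C}
    (hfin : ContravariantlyFinite (addClosure E)) (hE : HomVanishesFrom E E 1)
    (hM : M ∈ thickClosure {E}) (hME : HomVanishesFrom M E 1) (hP : HomVanishesFrom E P 1) :
    HomVanishesFrom M P 1 := by
  have descend (n : ℤ) (hn : 1 ≤ n)
      (ih : ∀ P, HomVanishesFrom E P 1 → HomVanishesFrom M P (n + 1)) (P : C)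
      (hP : HomVanishesFrom E P 1) : HomVanishesFrom M P n := by
    obtain ⟨T, hT, h₁, rfl, h₃⟩ := exists_distTriang_homVanishesFrom_zero hfin hE hP
    have hMQ : HomVanishesFrom M (T.obj₃⟦(-1 : ℤ)⟧) (n + 1) :=
      ih _ ((homVanishesFrom_shift_right_iff (neg_add_cancel 1)).2 h₃)
    exact .obj₂_right hT ((hME.of_mem_addClosure_right h₁).mono hn)
      ((homVanishesFrom_shift_right_iff (by ring)).1 hMQ)
  have reach (m : ℕ) (h : ∀ P, HomVanishesFrom E P 1 → HomVanishesFrom M P (m + 1)) :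
      ∀ P, HomVanishesFrom E P 1 → HomVanishesFrom M P 1 := by
    induction m with
    | zero => simpa using h
    | succ m ih => exact ih (descend _ (by omega) (by exact_mod_cast h))
  obtain ⟨b, hb⟩ := exists_homVanishesFrom_add hM
  exact reach b.toNat (fun P hP => (hb P 1 hP).mono (by omega)) P hP

theorem mem_addClosure_of_homVanishesFrom {E M : C}
    (hfin : ContravariantlyFinite (addClosure E)) (hE : HomVanishesFrom E E 1)
    (hM : M ∈ thickClosure {E}) (hEM : HomVanishesFrom E M 1) (hME : HomVanishesFrom M E 1) :
    M ∈ addClosure E := by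
  obtain ⟨T, hT, h₁, rfl, h₃⟩ := exists_distTriang_homVanishesFrom_zero hfin hE hEM
  have hMN : HomVanishesFrom T.obj₂ (T.obj₃⟦(-1 : ℤ)⟧) 1 := .of_mem_thickClosure hfin hE hM
    hME ((homVanishesFrom_shift_right_iff (neg_add_cancel 1)).2 h₃)
  have hg : T.mor₂ = 0 := ((homVanishesFrom_shift_right_iff (neg_add_cancel 1)).1 hMN).eq_zero _
  obtain ⟨s, hs⟩ := Triangle.coyoneda_exact₂ T hT (𝟙 _) (by rw [hg, comp_zero])
  exact (isSubcat_addClosure E).2.2 h₁ ⟨s, T.mor₁, hs.symm⟩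

theorem mem_starSet_of_homVanishesFrom {E A : C}
    (hfin : FunctoriallyFinite (addClosure E)) (hE : HomVanishesFrom E E 1)
    (hA : A ∈ thickClosure {E}) (hEA : HomVanishesFrom E A 2) (hAE : HomVanishesFrom A E 1) :
    A ∈ starSet (shiftSet (addClosure E) (-1)) (addClosure E) := by
  obtain ⟨E', hE', p, hp⟩ := hfin.2 A
  obtain ⟨Y, g, h, hT⟩ := distinguished_cocone_triangle p
  have hY : Y ∈ addClosure E := mem_addClosure_of_homVanishesFrom hfin.1 hE
    ((isThickSubcat_thickClosure _).2.2.1 _ hT hA (addClosure_subset_thickClosure E hE'))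
    (.obj₃_right hT hEA (hE.of_mem_addClosure_right hE'))
    (.obj₃_of_isLeftApprox hT hp (self_mem_addClosure E) hAE
      (hE.of_mem_addClosure_left hE'))
  exact ⟨_, ⟨Y, hY, ⟨Iso.refl _⟩⟩, E', hE', _, _, _, inv_rot_of_distTriang _ hT⟩

end Presilting

section TwoTerm

variable {𝓡 𝓧 : Set C} {A M N : C}

theorem starSet_mono {𝓐 𝓐' 𝓑 𝓑' : Set C} (h𝓐 : 𝓐 ⊆ 𝓐') (h𝓑 : 𝓑 ⊆ 𝓑') :
    starSet 𝓐 𝓑 ⊆ starSet 𝓐' 𝓑' := by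
  rintro M ⟨A, hA, B, hB, hT⟩
  exact ⟨A, h𝓐 hA, B, h𝓑 hB, hT⟩

theorem shiftSet_mono {D : Type*} [Category D] [HasShift D ℤ] {S S' : Set D} (h : S ⊆ S') (n : ℤ) :
    shiftSet S n ⊆ shiftSet S' n := by
  rintro M ⟨X, hX, e⟩
  exact ⟨X, h hX, e⟩

theorem IsThickSubcat.starSet_shiftSet_subset {S : Set C} (hS : IsThickSubcat S) (m : ℤ) :
    starSet (shiftSet S m) S ⊆ S := by
  rintro M ⟨A, ⟨X, hX, ⟨e⟩⟩, B, hB, f, g, h, hT⟩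
  exact hS.mem_obj₂ hT (hS.1 e.symm (hS.2.1 X hX m)) hB

theorem exists_distTriang_of_mem_twoTerm (hM : M ∈ twoTerm 𝓡) :
    ∃ R₀ ∈ 𝓡, ∃ R₁ ∈ 𝓡, ∃ (f : R₀ ⟶ M) (g : M ⟶ R₁⟦(1 : ℤ)⟧) (h : R₁⟦(1 : ℤ)⟧ ⟶ R₀⟦(1 : ℤ)⟧),
      Triangle.mk f g h ∈ distTriang C := by
  obtain ⟨R₀, hR₀, B, ⟨R₁, hR₁, ⟨e⟩⟩, f, g, h, hT⟩ := hM
  refine ⟨R₀, hR₀, R₁, hR₁, f, g ≫ e.hom, e.inv ≫ h, isomorphic_distinguished _ hT _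
    (Triangle.isoMk _ _ (Iso.refl R₀) (Iso.refl M) e.symm
      ((Category.comp_id f).trans (Category.id_comp f).symm) ?_ ?_)⟩
  · change (g ≫ e.hom) ≫ e.inv = 𝟙 M ≫ g
    simp
  · change (e.inv ≫ h) ≫ (𝟙 R₀)⟦(1 : ℤ)⟧' = e.inv ≫ h
    simp

theorem HomVanishesFrom.twoTerm_right {n : ℤ} (h : ∀ R ∈ 𝓡, HomVanishesFrom A R n)
    (hM : M ∈ twoTerm 𝓡) : HomVanishesFrom A M n := by
  obtain ⟨R₀, hR₀, R₁, hR₁, f, g, d, hT⟩ := exists_distTriang_of_mem_twoTerm hM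
  exact .obj₂_right hT (h R₀ hR₀)
    ((homVanishesFrom_shift_right_iff rfl).2 ((h R₁ hR₁).mono (by linarith)))

theorem HomVanishesFrom.twoTerm_left {n : ℤ} (h : ∀ R ∈ 𝓡, HomVanishesFrom R N n)
    (hM : M ∈ twoTerm 𝓡) : HomVanishesFrom M N (n + 1) := by
  obtain ⟨R₀, hR₀, R₁, hR₁, f, g, d, hT⟩ := exists_distTriang_of_mem_twoTerm hM
  exact .obj₂_left hT ((h R₀ hR₀).mono (by linarith))
    ((homVanishesFrom_shift_left_iff rfl).2 (h R₁ hR₁))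

theorem IsPresilting.homVanishesFrom_twoTerm (h𝓡 : IsPresilting 𝓡) (hA : A ∈ 𝓡)
    (hM : M ∈ twoTerm 𝓡) : HomVanishesFrom A M 1 :=
  .twoTerm_right (fun _ hR => h𝓡.homVanishesFrom hA hR) hM

theorem inShiftIdeal_of_mem_twoTerm {B : C} (hM : M ∈ twoTerm 𝓡)
    (hB : ∀ R ∈ 𝓡, ∀ f : R ⟶ B, f = 0) (φ : M ⟶ B) : InShiftIdeal 𝓡 φ := by
  obtain ⟨R₀, hR₀, R₁, hR₁, f, g, d, hT⟩ := exists_distTriang_of_mem_twoTerm hM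
  obtain ⟨ψ, hψ⟩ := Triangle.yoneda_exact₂ _ hT φ (hB R₀ hR₀ _)
  exact ⟨R₁, hR₁, g, ψ, hψ⟩

theorem IsPresilting.homVanishesFrom_one_iff (h𝓡 : IsPresilting 𝓡) (hM : M ∈ twoTerm 𝓡)
    (hN : N ∈ twoTerm 𝓡) :
    HomVanishesFrom M N 1 ↔ ∀ φ : M ⟶ N⟦(1 : ℤ)⟧, InShiftIdeal 𝓡 φ → φ = 0 := by
  have hRN : ∀ R ∈ 𝓡, HomVanishesFrom R N 1 := fun R hR => h𝓡.homVanishesFrom_twoTerm hR hN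
  refine ⟨fun h φ _ => h 1 le_rfl φ, fun h => .of_succ (.twoTerm_left hRN hM) fun φ => ?_⟩
  exact h φ (inShiftIdeal_of_mem_twoTerm hM (fun R hR => hRN R hR 1 le_rfl) φ)

theorem IsTwoTermWeakRelCT.isPresilting (h𝓡 : IsPresilting 𝓡) (h𝓧 : IsTwoTermWeakRelCT 𝓡 𝓧) :
    IsPresilting 𝓧 := by
  obtain ⟨htt, -, hchar⟩ := h𝓧
  exact fun X hX Y hY =>
    (h𝓡.homVanishesFrom_one_iff (htt hX) (htt hY)).2 (((hchar X).1 hX).2.1 Y hY)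

theorem IsTwoTermWeakRelCT.thickClosure_subset_thickClosure (h𝓧 : IsTwoTermWeakRelCT 𝓡 𝓧) :
    thickClosure 𝓡 ⊆ thickClosure 𝓧 := by
  have hthick := isThickSubcat_thickClosure 𝓧
  have hsub := subset_thickClosure 𝓧
  refine thickClosure_subset hthick fun R hR => hthick.starSet_shiftSet_subset (-1) ?_
  exact starSet_mono (shiftSet_mono hsub (-1)) hsub (h𝓧.2.1 R hR)

theorem IsTwoTermWeakRelCT.isSilting (h𝓡 : IsSilting 𝓡) (h𝓧 : IsTwoTermWeakRelCT 𝓡 𝓧) :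
    IsSilting 𝓧 :=
  ⟨h𝓧.isPresilting h𝓡.1,
    Set.univ_subset_iff.1 (h𝓡.2.symm.subset.trans h𝓧.thickClosure_subset_thickClosure)⟩

theorem IsSilting.mem_of_homVanishesFrom (h𝓧 : IsSilting 𝓧)
    (hfin : ∀ E ∈ 𝓧, ContravariantlyFinite (addClosure E)) (h𝓧sub : IsSubcat 𝓧)
    (hto : ∀ X ∈ 𝓧, HomVanishesFrom M X 1) (hfrom : ∀ X ∈ 𝓧, HomVanishesFrom X M 1) :
    M ∈ 𝓧 := by
  obtain ⟨E, hE, hM⟩ := exists_mem_thickClosure_singleton h𝓧sub (h𝓧.2 ▸ Set.mem_univ M)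
  exact addClosure_subset h𝓧sub hE (mem_addClosure_of_homVanishesFrom (hfin E hE)
    (h𝓧.1.homVanishesFrom hE hE) hM (hfrom E hE) (hto E hE))

theorem IsSilting.mem_starSet_of_homVanishesFrom (h𝓧 : IsSilting 𝓧)
    (hfin : ∀ E ∈ 𝓧, FunctoriallyFinite (addClosure E)) (h𝓧sub : IsSubcat 𝓧)
    (hto : ∀ X ∈ 𝓧, HomVanishesFrom A X 1) (hfrom : ∀ X ∈ 𝓧, HomVanishesFrom X A 2) :
    A ∈ starSet (shiftSet 𝓧 (-1)) 𝓧 := by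
  obtain ⟨E, hE, hA⟩ := exists_mem_thickClosure_singleton h𝓧sub (h𝓧.2 ▸ Set.mem_univ A)
  have hadd : addClosure E ⊆ 𝓧 := addClosure_subset h𝓧sub hE
  exact starSet_mono (shiftSet_mono hadd (-1)) hadd (_root_.mem_starSet_of_homVanishesFrom
    (hfin E hE) (h𝓧.1.homVanishesFrom hE hE) hA (hfrom E hE) (hto E hE))

theorem IsSilting.isTwoTermWeakRelCT (h𝓧 : IsSilting 𝓧)
    (hfin : ∀ E ∈ 𝓧, FunctoriallyFinite (addClosure E)) (h𝓡 : IsPresilting 𝓡)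
    (h𝓧sub : IsSubcat 𝓧) (h𝓧tt : 𝓧 ⊆ twoTerm 𝓡) : IsTwoTermWeakRelCT 𝓡 𝓧 := by
  refine ⟨h𝓧tt, fun R hR => ?_, fun M => ⟨fun hM => ?_, ?_⟩⟩
  · exact h𝓧.mem_starSet_of_homVanishesFrom hfin h𝓧sub
      (fun X hX => h𝓡.homVanishesFrom_twoTerm hR (h𝓧tt hX))
      (fun X hX => .twoTerm_left (fun R' hR' => h𝓡.homVanishesFrom hR' hR) (h𝓧tt hX))
  · exact ⟨h𝓧tt hM, fun X hX φ _ => h𝓧.1 M hM X hX 1 one_pos φ,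
      fun X hX φ _ => h𝓧.1 X hX M hM 1 one_pos φ⟩
  · rintro ⟨hM, hto, hfrom⟩
    exact h𝓧.mem_of_homVanishesFrom (fun E hE => (hfin E hE).1) h𝓧sub
      (fun X hX => (h𝓡.homVanishesFrom_one_iff hM (h𝓧tt hX)).2 (hto X hX))
      (fun X hX => (h𝓡.homVanishesFrom_one_iff (h𝓧tt hX) hM).2 (hfrom X hX))

end TwoTerm

theorem twoTermWeakRelCT_iff_silting_general
    (𝓡 𝓧 : Set C) (hfin : ∀ E ∈ 𝓧, FunctoriallyFinite (addClosure E))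
    (h𝓡 : IsSilting 𝓡) (h𝓧sub : IsSubcat 𝓧) (h𝓧tt : 𝓧 ⊆ twoTerm 𝓡) :
    IsTwoTermWeakRelCT 𝓡 𝓧 ↔ IsSilting 𝓧 :=
  ⟨fun h => h.isSilting h𝓡, fun h => h.isTwoTermWeakRelCT hfin h𝓡.1 h𝓧sub h𝓧tt⟩

/-- **Theorem (Statement 14).** Let `𝓡` be a silting subcategory of `C` and
`𝓧 ⊆ 𝓡 ∗ 𝓡[1]` a subcategory. Then `𝓧` is a two-term weak `𝓡[1]`-cluster tilting
subcategory of `C` if and only if `𝓧` is a silting subcategory of `C`. -/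
theorem twoTermWeakRelCT_iff_silting
    (k : Type*) [Field k] [IsAlgClosed k] [Linear k C]
    [∀ X Y : C, FiniteDimensional k (X ⟶ Y)] [IsIdempotentComplete C]
    (𝓡 𝓧 : Set C) (h𝓡sub : IsSubcat 𝓡) (h𝓡 : IsSilting 𝓡)
    (h𝓧sub : IsSubcat 𝓧) (h𝓧tt : 𝓧 ⊆ twoTerm 𝓡) :
    IsTwoTermWeakRelCT 𝓡 𝓧 ↔ IsSilting 𝓧 :=
  twoTermWeakRelCT_iff_silting_general 𝓡 𝓧
    (fun _ _ => ⟨contravariantlyFinite_addClosure k, covariantlyFinite_addClosure k⟩)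
    h𝓡 h𝓧sub h𝓧tt
end

section
/- Let R be a rigid subcategory of C and X an R[1]-rigid subcategory of C. Let M be an object of C with [R[1]](M, X[1]) = 0, let R₁ →f R₀ →g M →h R₁[1] be a triangle with R₀, R₁ ∈ R, and let u : R₀ → X₁ be a left X-approximation of R₀. Then uf : R₁ → X₁ is a left X-approximation of R₁. -/
/-!
Setting: `C` is a Hom-finite Krull–Schmidt `k`-linear triangulated category over an
algebraically closed field `k` (Krull–Schmidt is encoded as Hom-finiteness together with
idempotent completeness). Subcategories are identified with their classes of objects and
are always assumed full, closed under isomorphisms, direct sums and direct summands.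
-/

open CategoryTheory CategoryTheory.Limits CategoryTheory.Pretriangulated Opposite

universe v u

variable {C : Type u} [Category.{v} C] [Preadditive C] [HasZeroObject C] [HasShift C ℤ]
  [∀ n : ℤ, (shiftFunctor C n).Additive] [Pretriangulated C]

theorem IsLeftApprox.comp {D : Type*} [Category D] {𝓧 : Set D} {A B X : D} {f : A ⟶ B}
    {u : B ⟶ X} (hf : IsLeftApprox 𝓧 f) (hu : IsLeftApprox 𝓧 u) :
    IsLeftApprox 𝓧 (f ≫ u) := by
  intro X' hX' a
  obtain ⟨b, rfl⟩ := hf X' hX' a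
  obtain ⟨d, rfl⟩ := hu X' hX' b
  exact ⟨d, Category.assoc f u d⟩

theorem exists_mor₁_comp_eq_of_mor₃_comp_shift_eq_zero {T : Triangle C} (hT : T ∈ distTriang C)
    {Y : C} (a : T.obj₁ ⟶ Y) (ha : T.mor₃ ≫ a⟦(1 : ℤ)⟧' = 0) :
    ∃ b : T.obj₂ ⟶ Y, T.mor₁ ≫ b = a := by
  obtain ⟨b, hb⟩ : ∃ b : T.obj₂⟦(1 : ℤ)⟧ ⟶ Y⟦(1 : ℤ)⟧, a⟦(1 : ℤ)⟧' = (-T.mor₁⟦(1 : ℤ)⟧') ≫ b :=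
    Triangle.yoneda_exact₃ _ (rot_of_distTriang T hT) (a⟦(1 : ℤ)⟧') ha
  obtain ⟨c, rfl⟩ := (shiftFunctor C (1 : ℤ)).map_surjective b
  refine ⟨-c, (shiftFunctor C (1 : ℤ)).map_injective ?_⟩
  rw [Functor.map_comp, Functor.map_neg, Preadditive.comp_neg, hb, Preadditive.neg_comp]

theorem relOrthTo.isLeftApprox_of_distTriang {𝓡 𝓧 : Set C} {M R A : C} (hM : relOrthTo 𝓡 𝓧 M)
    (hR : R ∈ 𝓡) {f : R ⟶ A} {g : A ⟶ M} {h : M ⟶ R⟦(1 : ℤ)⟧}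
    (htri : Triangle.mk f g h ∈ distTriang C) : IsLeftApprox 𝓧 f := fun X' hX' a ↦
  have ha : h ≫ a⟦(1 : ℤ)⟧' = 0 := hM X' hX' _ ⟨R, hR, h, a⟦(1 : ℤ)⟧', rfl⟩
  exists_mor₁_comp_eq_of_mor₃_comp_shift_eq_zero htri a ha

theorem comp_leftApprox_is_leftApprox_general {𝓡 𝓧 : Set C} {M R A X : C}
    (hM : relOrthTo 𝓡 𝓧 M) (hR : R ∈ 𝓡) {f : R ⟶ A} {g : A ⟶ M} {h : M ⟶ R⟦(1 : ℤ)⟧}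
    (htri : Triangle.mk f g h ∈ distTriang C) {u : A ⟶ X} (hu : IsLeftApprox 𝓧 u) :
    IsLeftApprox 𝓧 (f ≫ u) :=
  (hM.isLeftApprox_of_distTriang hR htri).comp hu

/-- **Lemma (Statement 18).** Let `𝓡` be rigid and `𝓧` an `𝓡[1]`-rigid subcategory. Let
`M` satisfy `[𝓡[1]](M, 𝓧[1]) = 0`, let `R₁ → R₀ → M → R₁⟦1⟧` be a triangle with
`R₀, R₁ ∈ 𝓡`, and let `u : R₀ ⟶ X₁` be a left `𝓧`-approximation. Then
`f ≫ u : R₁ ⟶ X₁` is a left `𝓧`-approximation of `R₁`. -/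
theorem comp_leftApprox_is_leftApprox
    (k : Type*) [Field k] [IsAlgClosed k] [Linear k C]
    [∀ X Y : C, FiniteDimensional k (X ⟶ Y)] [IsIdempotentComplete C]
    (𝓡 𝓧 : Set C) (h𝓡sub : IsSubcat 𝓡) (h𝓡 : IsRigidSubcat 𝓡)
    (h𝓧sub : IsSubcat 𝓧) (h𝓧rig : IsRelRigid 𝓡 𝓧)
    (M : C) (hM : relOrthTo 𝓡 𝓧 M)
    (R₁ R₀ : C) (hR₁ : R₁ ∈ 𝓡) (hR₀ : R₀ ∈ 𝓡)
    (f : R₁ ⟶ R₀) (g : R₀ ⟶ M) (h : M ⟶ R₁⟦(1:ℤ)⟧)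
    (htri : Triangle.mk f g h ∈ distTriang C)
    (X₁ : C) (hX₁ : X₁ ∈ 𝓧) (u : R₀ ⟶ X₁) (hu : IsLeftApprox 𝓧 u) :
    IsLeftApprox 𝓧 (f ≫ u) :=
  comp_leftApprox_is_leftApprox_general hM hR₁ htri hu
end

section
/- Let R be a rigid subcategory of C and X a two-term weak R[1]-cluster tilting subcategory of C. Then Ker(H(X)) = R ∩ X[-1]; that is, for an object R ∈ R one has Hom_C(R, X) = 0 for all X ∈ X if and only if R ∈ X[-1]. -/
/-!
Setting: `C` is a Hom-finite Krull–Schmidt `k`-linear triangulated category over an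
algebraically closed field `k` (Krull–Schmidt is encoded as Hom-finiteness together with
idempotent completeness). Subcategories are identified with their classes of objects and
are always assumed full, closed under isomorphisms, direct sums and direct summands.
-/

open CategoryTheory CategoryTheory.Limits CategoryTheory.Pretriangulated Opposite

universe v u

variable {C : Type u} [Category.{v} C] [Preadditive C] [HasZeroObject C] [HasShift C ℤ]
  [∀ n : ℤ, (shiftFunctor C n).Additive] [Pretriangulated C]

/-!
Relative rigidity forces `Hom(R, X) = 0` when `R[1] ∈ 𝓧`: the shift `R[1] ⟶ X[1]` of a map
`R ⟶ X` lies in `[𝓡[1]]` because its source does. Conversely, if `Hom(R, 𝓧) = 0`, the second map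
of a triangle `X₁[-1] ⟶ R ⟶ X₂ ⟶ X₁` vanishes, so the triangle splits and `R` is a summand of
`X₁[-1]`.
-/

theorem IsSubcat.isStableUnderRetracts {D : Type*} [Category D] [Preadditive D] {S : Set D}
    (hS : IsSubcat S) : ObjectProperty.IsStableUnderRetracts (· ∈ S) where
  of_retract h hY := hS.2.2 hY ⟨h.i, h.r, h.retract⟩

section Shift

variable {D : Type*} [Category D] [HasShift D ℤ]

theorem mem_shiftSet_iff {𝓢 : Set D} (h𝓢 : ObjectProperty.IsClosedUnderIsomorphisms (· ∈ 𝓢))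
    {a b : ℤ} (hab : a + b = 0) {Y : D} : Y ∈ shiftSet 𝓢 a ↔ Y⟦b⟧ ∈ 𝓢 := by
  constructor
  · rintro ⟨X, hX, ⟨e⟩⟩
    exact h𝓢.of_iso (((shiftFunctor D b).mapIso e ≪≫
      (shiftFunctorCompIsoId D a b hab).app X).symm) hX
  · intro hY
    exact ⟨Y⟦b⟧, hY, ⟨((shiftFunctorCompIsoId D b a (by rwa [add_comm])).app Y).symm⟩⟩

theorem relOrthTo.eq_zero_of_shift [Preadditive D] {𝓡 𝓧 : Set D} {R X : D}
    (h : relOrthTo 𝓡 𝓧 (R⟦(1 : ℤ)⟧)) (hR : R ∈ 𝓡) (hX : X ∈ 𝓧) (φ : R ⟶ X) : φ = 0 := by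
  have hφ : InShiftIdeal 𝓡 (φ⟦(1 : ℤ)⟧') := ⟨R, hR, 𝟙 _, φ⟦(1 : ℤ)⟧', (Category.id_comp _).symm⟩
  exact (shiftFunctor D (1 : ℤ)).map_eq_zero_iff.1 (h X hX _ hφ)

end Shift

theorem nonempty_retract_of_distTriang {T : Triangle C} (hT : T ∈ distTriang C)
    (h : T.mor₂ = 0) : Nonempty (Retract T.obj₂ T.obj₁) :=
  have := T.epi₁ hT h
  have := isSplitEpi_of_epi T.mor₁
  ⟨⟨section_ T.mor₁, T.mor₁, IsSplitEpi.id T.mor₁⟩⟩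

theorem exists_retract_of_mem_starSet {𝓐 𝓑 : Set C} {M : C} (hM : M ∈ starSet 𝓐 𝓑)
    (h𝓑 : ∀ B ∈ 𝓑, ∀ φ : M ⟶ B, φ = 0) : ∃ A ∈ 𝓐, Nonempty (Retract M A) := by
  obtain ⟨A, hA, B, hB, f, g, h, hT⟩ := hM
  exact ⟨A, hA, nonempty_retract_of_distTriang hT (h𝓑 B hB g)⟩

theorem IsTwoTermWeakRelCT.isRelRigid {𝓡 𝓧 : Set C} (h𝓧 : IsTwoTermWeakRelCT 𝓡 𝓧) :
    IsRelRigid 𝓡 𝓧 :=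
  fun X hX => ((h𝓧.2.2 X).1 hX).2.1

theorem ker_eq_inter_shiftNegOne_general (𝓡 𝓧 : Set C)
    (h𝓧retract : ObjectProperty.IsStableUnderRetracts (· ∈ 𝓧))
    (h𝓧rigid : IsRelRigid 𝓡 𝓧) (h𝓡 : 𝓡 ⊆ starSet (shiftSet 𝓧 (-1)) 𝓧) :
    ∀ R ∈ 𝓡, (∀ X ∈ 𝓧, ∀ φ : R ⟶ X, φ = 0) ↔ R ∈ shiftSet 𝓧 (-1) := by
  have mem_iff {Y : C} : Y ∈ shiftSet 𝓧 (-1) ↔ Y⟦(1 : ℤ)⟧ ∈ 𝓧 :=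
    mem_shiftSet_iff inferInstance (neg_add_cancel 1)
  intro R hR
  rw [mem_iff]
  constructor
  · intro hR𝓧
    obtain ⟨A, hA, ⟨r⟩⟩ := exists_retract_of_mem_starSet (h𝓡 hR) hR𝓧
    exact h𝓧retract.of_retract (r.map (shiftFunctor C (1 : ℤ))) (mem_iff.1 hA)
  · intro hR𝓧 X hX φ
    have hR_orth : relOrthTo 𝓡 𝓧 (R⟦(1 : ℤ)⟧) := h𝓧rigid _ hR𝓧
    exact hR_orth.eq_zero_of_shift hR hX φ

/-- **Lemma (Statement 19).** Let `𝓡` be rigid and `𝓧` a two-term weak `𝓡[1]`-cluster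
tilting subcategory. Then `Ker(ℍ(𝓧)) = 𝓡 ∩ 𝓧[-1]`: for `R ∈ 𝓡`, one has
`Hom_C(R, X) = 0` for all `X ∈ 𝓧` if and only if `R ∈ 𝓧[-1]`. -/
theorem ker_eq_inter_shiftNegOne
    (k : Type*) [Field k] [IsAlgClosed k] [Linear k C]
    [∀ X Y : C, FiniteDimensional k (X ⟶ Y)] [IsIdempotentComplete C]
    (𝓡 𝓧 : Set C) (h𝓡sub : IsSubcat 𝓡) (h𝓡 : IsRigidSubcat 𝓡)
    (h𝓧sub : IsSubcat 𝓧) (h𝓧 : IsTwoTermWeakRelCT 𝓡 𝓧) :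
    ∀ R ∈ 𝓡, (∀ X ∈ 𝓧, ∀ φ : R ⟶ X, φ = 0) ↔ R ∈ shiftSet 𝓧 (-1) :=
  ker_eq_inter_shiftNegOne_general 𝓡 𝓧 h𝓧sub.isStableUnderRetracts h𝓧.isRelRigid h𝓧.2.1
end
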